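/- arXiv:1912.09470 — 5 statements merged into one kernel-verified Lean document; each statement's English description precedes it below -/
import Mathlib

section
/- Let n ≥ 1, k ≥ 0 be integers and let ρ₁, ρ₂ : ℝⁿ → [0,∞) be integrable even functions (ρ_j(−t) = ρ_j(t)) satisfying ∫_{ℝⁿ} (1 + |t|²)^{k+1} ρ_j(t) dt < ∞ for j = 1, 2. Then there exist a probability space and jointly Gaussian centered Gaussian processes f₁, f₂ on ℝⁿ such that: (i) E[f_j(x) f_j(y)] = ∫_{ℝⁿ} e^{2πi (x−y)·t} ρ_j(t) dt for j = 1, 2 and all x, y ∈ ℝⁿ; (ii) the difference F = f₂ − f₁ is a centered Gaussian process with E[F(x) F(y)] = ∫_{ℝⁿ} e^{2πi (x−y)·t} (√ρ₂(t) − √ρ₁(t))² dt for all x, y ∈ ℝⁿ. In particular, for every multi-index α with |α| ≤ k+1, the covariance kernel C(x,y) = E[F(x)F(y)] satisfies ∂^α_x ∂^α_y C(x,y)|_{y=x} = (2π)^{2|α|} ∫_{ℝⁿ} t^{2α} (√ρ₂(t) − √ρ₁(t))² dt for all x. -/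
/-!
Both fields are obtained from one Gaussian white noise on frequency space. Let `W` be an isonormal
process on the real Hilbert space `L²(ℝⁿ; ℂ)`, that is, a linear isometry into a space of centered
Gaussian variables (`exists_isonormal`), and set `f_j(x) = W(√ρ_j e^{2πi x·t})`. All linear
combinations of values of `f₁` and `f₂` lie in the image of `W`, so the two fields are jointly
Gaussian (`isCenteredGaussianProcess_of_isonormal`), and covariances are real inner products in
`L²(ℝⁿ; ℂ)`, which are cosine transforms (`inner_wave`). Evenness turns these into the complex
Fourier integrals (`ofReal_integral_cos_eq`). By linearity `f₂ - f₁` is the field with amplitude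
`√ρ₂ - √ρ₁`, hence with spectral density `(√ρ₂ - √ρ₁)²`.

The moment assumption on `ρ₁` and `ρ₂` passes to `(√ρ₂ - √ρ₁)² ≤ ρ₁ + ρ₂`, and it justifies
differentiation under the integral sign up to total order `2(k + 1)`. The derivatives are computed in
the class of integrals `∫ q(t) cos (2π v·t + φ(t)) dt`, which is stable under differentiation
(`pd_cosInt`, `pdm_cosInt`, `mdd_cosInt`).
-/

open MeasureTheory ProbabilityTheory Real Filter

noncomputable section

abbrev En (n : ℕ) := EuclideanSpace ℝ (Fin n)

/-- Partial derivative in direction `i`. -/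
def pd {n : ℕ} (i : Fin n) (f : En n → ℝ) (x : En n) : ℝ :=
  deriv (fun t : ℝ => f (x + t • EuclideanSpace.single i (1 : ℝ))) 0

/-- Iterated partial derivative with multi-index `α`. -/
def pdm {n : ℕ} (α : Fin n → ℕ) (f : En n → ℝ) : En n → ℝ :=
  ((List.ofFn (fun i : Fin n => (pd i)^[α i])).foldr (· ∘ ·) id) f

/-- Mixed derivative `∂^α_x ∂^α_y K(x,y)|_{y=x}`. -/
def mdd {n : ℕ} (α : Fin n → ℕ) (K : En n → En n → ℝ) (x : En n) : ℝ :=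
  pdm α (fun u => pdm α (K u) x) x

/-- Centered Gaussian process: every finite real linear combination of its
values is a centered Gaussian random variable. -/
def IsCenteredGaussianProcess {Ω : Type*} [MeasurableSpace Ω] (P : Measure Ω)
    {ι : Type*} (f : ι → Ω → ℝ) : Prop :=
  ∀ (m : ℕ) (x : Fin m → ι) (a : Fin m → ℝ), ∃ v : NNReal,
    P.map (fun ω => ∑ i, a i * f (x i) ω) = gaussianReal 0 v

/-- Two processes are jointly Gaussian if every finite real linear combination of
values of both is a centered Gaussian random variable. -/
def JointlyGaussian {Ω : Type*} [MeasurableSpace Ω] (P : Measure Ω)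
    {ι : Type*} (f₁ f₂ : ι → Ω → ℝ) : Prop :=
  IsCenteredGaussianProcess P (Sum.elim f₁ f₂)

/-! ### Isonormal Gaussian processes -/

/-- A centered Gaussian law is determined by its variance, which is the squared `L²` norm. -/
lemma map_eq_gaussianReal_nnnorm {Ω : Type*} [MeasurableSpace Ω] {P : Measure Ω}
    [IsProbabilityMeasure P] {X : Lp ℝ 2 P} (hX : HasGaussianLaw X P) (h0 : ∫ ω, X ω ∂P = 0) :
    P.map X = gaussianReal 0 (‖X‖₊ ^ 2) := by
  rw [hX.map_eq_gaussianReal, h0]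
  congr 1
  rw [variance_of_integral_eq_zero (Lp.aestronglyMeasurable X).aemeasurable h0]
  ext
  have h := L2.inner_def (𝕜 := ℝ) X X
  rw [real_inner_self_eq_norm_sq] at h
  simp only [NNReal.coe_pow, coe_nnnorm, h]
  rw [Real.coe_toNNReal]
  · refine integral_congr_ae (Eventually.of_forall fun ω => ?_)
    simp [sq]
  · exact integral_nonneg fun ω => by positivity

/-- Elements of `L²(P)` with a centered Gaussian law of the right variance form a closed set,
because the characteristic function at each `t` is continuous on `L²(P)`. -/
lemma isClosed_gaussian {Ω : Type*} [MeasurableSpace Ω] {P : Measure Ω}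
    [IsProbabilityMeasure P] :
    IsClosed {X : Lp ℝ 2 P | P.map X = gaussianReal 0 (‖X‖₊ ^ 2)} := by
  have key : {X : Lp ℝ 2 P | P.map X = gaussianReal 0 (‖X‖₊ ^ 2)} =
      ⋂ t : ℝ, {X : Lp ℝ 2 P | charFun (P.map X) t = Complex.exp (-(‖X‖ ^ 2 * t ^ 2 / 2))} := by
    ext X
    have := Measure.isProbabilityMeasure_map (μ := P) (Lp.aestronglyMeasurable X).aemeasurable
    simp only [Set.mem_ofPred_eq, Set.mem_iInter]
    constructor
    · intro h t
      rw [h, charFun_gaussianReal]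
      simp
    · intro h
      refine Measure.ext_of_charFun (funext fun t => ?_)
      rw [h, charFun_gaussianReal]
      simp
  rw [key]
  refine isClosed_iInter fun t => isClosed_eq ?_ (by fun_prop)
  -- the characteristic function at `t` is Lipschitz for the `L²` distance
  refine (LipschitzWith.of_dist_le_mul (K := ‖t‖₊) fun X Y => ?_).continuous
  have hX := Lp.aestronglyMeasurable X
  have hY := Lp.aestronglyMeasurable Y
  have e : ∀ Z : Lp ℝ 2 P, charFun (P.map Z) t = ∫ ω, Complex.exp (t * Z ω * Complex.I) ∂P := by
    intro Z
    rw [charFun_apply_real, integral_map (Lp.aestronglyMeasurable Z).aemeasurable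
      (by fun_prop)]
  have i : ∀ Z : Lp ℝ 2 P, Integrable (fun ω => Complex.exp (t * Z ω * Complex.I)) P := by
    intro Z
    have hZ := (Lp.aestronglyMeasurable Z).aemeasurable
    refine Integrable.of_bound (C := 1) (by fun_prop) (Eventually.of_forall fun ω => ?_)
    rw [← Complex.ofReal_mul, Complex.norm_exp_ofReal_mul_I]
  rw [dist_eq_norm, e, e, ← integral_sub (i X) (i Y)]
  have hXY : MemLp (fun ω => X ω - Y ω) 2 P := (Lp.memLp X).sub (Lp.memLp Y)
  have hn : ∫ ω, ‖X ω - Y ω‖ ∂P ≤ ‖X - Y‖ := by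
    have h1 : ∫ ω, ‖X ω - Y ω‖ ∂P = (eLpNorm (fun ω => X ω - Y ω) 1 P).toReal := by
      rw [eLpNorm_one_eq_lintegral_enorm, integral_norm_eq_lintegral_enorm (by fun_prop)]
    rw [h1, Lp.norm_def, eLpNorm_congr_ae (Lp.coeFn_sub X Y)]
    refine ENNReal.toReal_mono hXY.2.ne ?_
    exact eLpNorm_le_eLpNorm_of_exponent_le (by norm_num) hXY.1
  calc ‖∫ ω, (Complex.exp (t * X ω * Complex.I) - Complex.exp (t * Y ω * Complex.I)) ∂P‖
      ≤ ∫ ω, ‖t‖ * ‖X ω - Y ω‖ ∂P := by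
        refine norm_integral_le_of_norm_le
          (((hXY.integrable (by norm_num)).norm).const_mul _)
          (Eventually.of_forall fun ω => ?_)
        have h2 : Complex.exp (t * X ω * Complex.I) - Complex.exp (t * Y ω * Complex.I)
            = Complex.exp (t * Y ω * Complex.I) *
              (Complex.exp (Complex.I * ((t * (X ω - Y ω) : ℝ) : ℂ)) - 1) := by
          rw [mul_sub, ← Complex.exp_add, mul_one]
          congr 2
          push_cast
          ring
        rw [h2, norm_mul, ← Complex.ofReal_mul, Complex.norm_exp_ofReal_mul_I, one_mul,
          ← norm_mul]
        exact Real.norm_exp_I_mul_ofReal_sub_one_le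
    _ ≤ ‖t‖₊ * dist X Y := by
        rw [integral_const_mul, dist_eq_norm]
        exact mul_le_mul_of_nonneg_left hn (norm_nonneg _)

/-- Every real Hilbert space carries an isonormal process: an isometry into the centered Gaussian
variables of some probability space. A Hilbert basis of `H` is sent to independent standard Gaussian
coordinates on a product space; the basis need not be countable. -/
theorem exists_isonormal (H : Type) [NormedAddCommGroup H] [InnerProductSpace ℝ H]
    [CompleteSpace H] :
    ∃ (Ω : Type) (_ : MeasurableSpace Ω) (P : Measure Ω) (_ : IsProbabilityMeasure P)
      (W : H →ₗᵢ[ℝ] Lp ℝ 2 P), ∀ h, P.map (W h) = gaussianReal 0 (‖h‖₊ ^ 2) := by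
  obtain ⟨w, b, -⟩ := exists_hilbertBasis ℝ H
  let P : Measure (w → ℝ) := Measure.infinitePi fun _ => gaussianReal 0 1
  have hP : ∀ i, MeasurePreserving (fun ω : w → ℝ => ω i) P (gaussianReal 0 1) :=
    fun i => measurePreserving_eval_infinitePi _ i
  have hind : iIndepFun (fun (i : w) (ω : w → ℝ) => ω i) P :=
    iIndepFun_infinitePi (X := fun _ x => x) (fun _ => measurable_id)
  have hLaw : ∀ i, HasGaussianLaw (fun ω : w → ℝ => ω i) P := fun i => (hP i).hasLaw.hasGaussianLaw
  have hmem : ∀ i, MemLp (fun ω : w → ℝ => ω i) 2 P := fun i => (hLaw i).memLp_two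
  have hmean : ∀ i, ∫ ω, ω i ∂P = 0 := fun i => by
    rw [(hP i).hasLaw.integral_eq, integral_id_gaussianReal]
  have hvar : ∀ i, ∫ ω, ω i ^ 2 ∂P = 1 := fun i => by
    rw [← variance_of_integral_eq_zero (hLaw i).aemeasurable (hmean i), (hP i).hasLaw.variance_eq]
    simp
  let ξ : w → Lp ℝ 2 P := fun i => (hmem i).toLp
  have hξ : ∀ i, ξ i =ᵐ[P] fun ω => ω i := fun i => (hmem i).coeFn_toLp
  have hon : Orthonormal ℝ ξ := by
    classical
    rw [orthonormal_iff_ite]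
    intro i j
    rw [L2.inner_def]
    have h1 : ∫ ω, inner ℝ (ξ i ω) (ξ j ω) ∂P = ∫ ω, ω i * ω j ∂P := by
      refine integral_congr_ae ?_
      filter_upwards [hξ i, hξ j] with ω h1 h2
      rw [h1, h2]
      simp [mul_comm]
    rw [h1]
    split_ifs with hij
    · subst hij
      simpa [sq] using hvar i
    · have := (hind.indepFun hij).integral_mul_eq_mul_integral
        (hmem i).1 (hmem j).1
      simpa [hmean] using this
  let W : H →ₗᵢ[ℝ] Lp ℝ 2 P :=
    hon.orthogonalFamily.linearIsometry.comp b.repr.toLinearIsometry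
  refine ⟨w → ℝ, inferInstance, P, inferInstance, W, fun h => ?_⟩
  have hW : W h ∈ {X : Lp ℝ 2 P | P.map X = gaussianReal 0 (‖X‖₊ ^ 2)} := by
    have hs : HasSum _ (W h) := hon.orthogonalFamily.hasSum_linearIsometry (b.repr h)
    refine isClosed_gaussian.mem_of_tendsto hs (Eventually.of_forall fun s => ?_)
    have hae : (⇑(∑ i ∈ s, b.repr h i • ξ i : Lp ℝ 2 P)) =ᵐ[P]
        fun ω => ∑ i ∈ s, b.repr h i * ω i := by
      have h1 : ∀ᵐ ω ∂P, ∀ i ∈ s, (b.repr h i • ξ i : Lp ℝ 2 P) ω = b.repr h i * ω i := by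
        rw [Finset.eventually_all]
        intro i _
        filter_upwards [Lp.coeFn_smul (b.repr h i) (ξ i), hξ i] with ω h1 h2
        rw [h1, Pi.smul_apply, h2, smul_eq_mul]
      filter_upwards [Lp.coeFn_finsetSum s (fun i => b.repr h i • ξ i), h1] with ω h1 h2
      rw [h1, Finset.sum_apply]
      exact Finset.sum_congr rfl h2
    have hGs : HasGaussianLaw (fun ω : w → ℝ => ∑ i ∈ s, b.repr h i * ω i) P := by
      have h1 : HasGaussianLaw (fun ω : w → ℝ => ∑ i : s, b.repr h i * ω i) P := by
        refine iIndepFun.hasGaussianLaw_fun_sum (X := fun (i : s) (ω : w → ℝ) => b.repr h i * ω i)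
          (fun i => (hLaw i).fun_smul (b.repr h i)) ?_
        exact (hind.precomp Subtype.val_injective).comp (fun i : s => fun y => b.repr h i * y)
          (fun i => by fun_prop)
      convert h1 using 2 with ω
      exact (Finset.sum_coe_sort s fun i => b.repr h i * ω i).symm
    have : (∑ i ∈ s, b.repr h i • ξ i : Lp ℝ 2 P) ∈
        {X : Lp ℝ 2 P | P.map X = gaussianReal 0 (‖X‖₊ ^ 2)} := by
      refine map_eq_gaussianReal_nnnorm (hGs.congr hae.symm) ?_
      rw [integral_congr_ae hae, integral_finsetSum]
      · simp [integral_const_mul, hmean]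
      · exact fun i _ => ((hmem i).integrable (by norm_num)).const_mul _
    simpa [LinearIsometry.toSpanSingleton_apply] using this
  simpa using hW

/-! ### Derivatives of cosine integrals -/

/-- The cosine integral `v ↦ ∫ q(t) cos (2π v·t + φ(t)) dt`. The phase `φ` is kept as a parameter so
that the class is stable under differentiation: each derivative shifts `φ` by `π / 2`. -/
def cosInt {n : ℕ} (q φ : En n → ℝ) (v : En n) : ℝ :=
  ∫ t : En n, q t * Real.cos (2 * π * (∑ i, v i * t i) + φ t)

lemma abs_coord_le {n : ℕ} (t : En n) (i : Fin n) : |t i| ≤ 1 + ‖t‖ := by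
  have := PiLp.norm_apply_le t i
  rw [Real.norm_eq_abs] at this
  linarith

lemma integrable_coord_mul {n : ℕ} {N : ℕ} {q : En n → ℝ} (hq : Measurable q)
    (hint : Integrable fun t => (1 + ‖t‖) ^ (N + 1) * q t) (i : Fin n) :
    Integrable fun t => (1 + ‖t‖) ^ N * (2 * π * t i * q t) := by
  refine (hint.const_mul (2 * π)).mono (by fun_prop) (Eventually.of_forall fun t => ?_)
  have h := abs_coord_le t i
  have h0 : 0 ≤ 1 + ‖t‖ := by positivity
  simp only [norm_mul, norm_pow, Real.norm_eq_abs, abs_of_nonneg h0, abs_of_pos Real.pi_pos, abs_two]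
  calc (1 + ‖t‖) ^ N * (2 * π * |t i| * |q t|)
      = (2 * π * (1 + ‖t‖) ^ N * |q t|) * |t i| := by ring
    _ ≤ (2 * π * (1 + ‖t‖) ^ N * |q t|) * (1 + ‖t‖) := by gcongr
    _ = _ := by ring

lemma integrable_of_weight {n : ℕ} {N : ℕ} {q : En n → ℝ} (hq : Measurable q)
    (hint : Integrable fun t => (1 + ‖t‖) ^ N * q t) : Integrable q := by
  refine hint.mono (by fun_prop) (Eventually.of_forall fun t => ?_)
  rw [norm_mul]
  refine le_mul_of_one_le_left (norm_nonneg _) ?_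
  rw [Real.norm_of_nonneg (by positivity)]
  exact one_le_pow₀ (by linarith [norm_nonneg t])

/-- Differentiation under the integral sign; the derivative of `cos` is written `cos (· + π / 2)`. -/
lemma pd_cosInt {n : ℕ} {N : ℕ} {q φ : En n → ℝ} (hq : Measurable q) (hφ : Measurable φ)
    (hint : Integrable fun t => (1 + ‖t‖) ^ (N + 1) * q t) (i : Fin n) :
    pd i (cosInt q φ) = cosInt (fun t => 2 * π * t i * q t) (fun t => φ t + π / 2) := by
  funext v
  have hq0 : Integrable q := integrable_of_weight hq hint
  have hq1 : Integrable fun t : En n => 2 * π * t i * q t :=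
    integrable_of_weight (by fun_prop) (integrable_coord_mul hq hint i)
  let θ : ℝ → En n → ℝ := fun s t => 2 * π * (∑ j, v j * t j) + 2 * π * (s * t i) + φ t
  have hθ : ∀ s, Measurable (θ s) := fun s => by fun_prop
  have hsum : ∀ (s : ℝ) (t : En n), 2 * π * (∑ j, (v + s • EuclideanSpace.single i (1 : ℝ)) j * t j)
      + φ t = θ s t := by
    intro s t
    have : ∑ j, (v + s • EuclideanSpace.single i (1 : ℝ)) j * t j = ∑ j, v j * t j + s * t i := by
      simp [add_mul, Finset.sum_add_distrib]
    rw [this]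
    simp only [θ]
    ring
  have hderiv := hasDerivAt_integral_of_dominated_loc_of_deriv_le (μ := volume) (x₀ := (0 : ℝ))
    (s := Set.univ) (F := fun s t => q t * Real.cos (θ s t))
    (F' := fun s t => 2 * π * t i * q t * Real.cos (θ s t + π / 2))
    (bound := fun t => ‖2 * π * t i * q t‖) univ_mem
    (Eventually.of_forall fun s => by have := hθ s; fun_prop)
    (hq0.mono (by have := hθ 0; fun_prop) (Eventually.of_forall fun t => by
      rw [norm_mul]
      exact mul_le_of_le_one_right (norm_nonneg _) (Real.abs_cos_le_one _)))
    (by have := hθ 0; fun_prop)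
    (Eventually.of_forall fun t s _ => by
      rw [norm_mul]
      exact mul_le_of_le_one_right (norm_nonneg _) (Real.abs_cos_le_one _))
    hq1.norm
    (Eventually.of_forall fun t s _ => by
      have h1 : HasDerivAt (fun s => θ s t) (2 * π * t i) s := by
        have := ((((hasDerivAt_id s).mul_const (t i)).const_mul (2 * π)).const_add
          (2 * π * (∑ j, v j * t j))).add_const (φ t)
        rwa [one_mul] at this
      have h2 := h1.cos.const_mul (q t)
      rwa [show q t * (-Real.sin (θ s t) * (2 * π * t i)) =
        2 * π * t i * q t * Real.cos (θ s t + π / 2) by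
          rw [Real.cos_add_pi_div_two]; ring] at h2)
  have h2 := hderiv.2.deriv
  simp only [pd, cosInt, hsum]
  rw [h2]
  refine integral_congr_ae (Eventually.of_forall fun t => ?_)
  simp only [θ, zero_mul, mul_zero, zero_add, add_assoc]

lemma iterate_pd_cosInt {n : ℕ} (i : Fin n) (m : ℕ) {N : ℕ} {q φ : En n → ℝ} (hq : Measurable q)
    (hφ : Measurable φ) (hint : Integrable fun t => (1 + ‖t‖) ^ (N + m) * q t) :
    (pd i)^[m] (cosInt q φ) =
        cosInt (fun t => (2 * π * t i) ^ m * q t) (fun t => φ t + m * (π / 2)) ∧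
      Integrable fun t => (1 + ‖t‖) ^ N * ((2 * π * t i) ^ m * q t) := by
  induction m generalizing N with
  | zero => simpa using hint
  | succ m ih =>
    obtain ⟨h1, h2⟩ := ih (N := N + 1) (by convert hint using 4; ring)
    constructor
    · rw [Function.iterate_succ_apply', h1, pd_cosInt (by fun_prop) (by fun_prop) h2]
      congr 1
      · funext t; ring
      · funext t; push_cast; ring
    · convert integrable_coord_mul (by fun_prop) h2 i using 3
      ring

/-- The formula for iterated derivatives along an arbitrary list of coordinates, so that the
iterated derivative `pdm`, a fold over the list of all coordinates, can be treated by induction. -/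
lemma foldr_pd_cosInt {n : ℕ} (α : Fin n → ℕ) (l : List (Fin n)) {N : ℕ} {q φ : En n → ℝ}
    (hq : Measurable q) (hφ : Measurable φ)
    (hint : Integrable fun t => (1 + ‖t‖) ^ (N + (l.map α).sum) * q t) :
    ((l.map fun i => (pd i)^[α i]).foldr (· ∘ ·) id) (cosInt q φ) =
        cosInt (fun t => (l.map fun i => (2 * π * t i) ^ α i).prod * q t)
          (fun t => φ t + (l.map α).sum * (π / 2)) ∧
      Measurable (fun t : En n => (l.map fun i => (2 * π * t i) ^ α i).prod) ∧
      Integrable fun t => (1 + ‖t‖) ^ N * ((l.map fun i => (2 * π * t i) ^ α i).prod * q t) := by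
  induction l generalizing N with
  | nil => simpa using hint
  | cons i l ih =>
    obtain ⟨h1, h2, h3⟩ := ih (N := N + α i) (by
      convert hint using 4
      simp only [List.map_cons, List.sum_cons]
      ring)
    obtain ⟨h4, h5⟩ := iterate_pd_cosInt i (α i) (h2.mul hq)
      (φ := fun t => φ t + (l.map α).sum * (π / 2)) (by fun_prop) h3
    refine ⟨?_, ?_, ?_⟩
    · simp only [List.map_cons, List.foldr_cons, Function.comp_apply, h1]
      refine h4.trans ?_
      congr 1
      · funext t
        simp only [List.prod_cons, mul_assoc, Pi.mul_apply]
      · funext t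
        simp only [List.sum_cons]
        push_cast
        ring
    · simp only [List.map_cons, List.prod_cons]
      fun_prop
    · simpa only [List.map_cons, List.prod_cons, mul_assoc, Pi.mul_apply] using h5

lemma pdm_cosInt {n : ℕ} (α : Fin n → ℕ) {N : ℕ} {q φ : En n → ℝ}
    (hq : Measurable q) (hφ : Measurable φ)
    (hint : Integrable fun t => (1 + ‖t‖) ^ (N + ∑ i, α i) * q t) :
    pdm α (cosInt q φ) =
        cosInt (fun t => (∏ i, (2 * π * t i) ^ α i) * q t)
          (fun t => φ t + (∑ i, α i : ℕ) * (π / 2)) ∧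
      Integrable fun t => (1 + ‖t‖) ^ N * ((∏ i, (2 * π * t i) ^ α i) * q t) := by
  have hs : ((List.finRange n).map α).sum = ∑ i, α i := by
    rw [← List.ofFn_eq_map, List.sum_ofFn]
  have hp : ∀ t : En n, ((List.finRange n).map fun i => (2 * π * t i) ^ α i).prod =
      ∏ i, (2 * π * t i) ^ α i := fun t => by
    rw [← List.ofFn_eq_map, List.prod_ofFn]
  have h := foldr_pd_cosInt α (List.finRange n) (N := N) hq hφ (by rwa [hs])
  simp only [hs, hp] at h
  refine ⟨?_, h.2.2⟩
  rw [← h.1, pdm, List.ofFn_eq_map]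

/-- Each of the two rounds of derivatives produces a factor `(2π t)^α`. Differentiation in `v` shifts
the phase by `|α| π / 2`; as a function of `u` the phase has the opposite sign, so differentiation in
`u` cancels this shift, leaving `cos 0 = 1` on the diagonal. -/
lemma mdd_cosInt {n : ℕ} (α : Fin n → ℕ) {σ : En n → ℝ} (hσ : Measurable σ)
    (hint : Integrable fun t => (1 + ‖t‖) ^ (2 * ∑ i, α i) * σ t) (x : En n) :
    mdd α (fun u v => ∫ t : En n, σ t * Real.cos (2 * π * ∑ i, (u i - v i) * t i)) x =
      (2 * π) ^ (2 * ∑ i, α i) * ∫ t : En n, (∏ i, t i ^ (2 * α i)) * σ t := by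
  have h1 : ∀ u : En n, (fun v : En n => ∫ t : En n, σ t *
      Real.cos (2 * π * ∑ i, (u i - v i) * t i)) =
      cosInt σ (fun t => -(2 * π * ∑ i, u i * t i)) := by
    intro u
    funext v
    refine integral_congr_ae (Eventually.of_forall fun t => ?_)
    simp only
    rw [← Real.cos_neg]
    congr 2
    simp only [sub_mul, Finset.sum_sub_distrib]
    ring
  simp only [mdd]
  have h2 : ∀ u : En n, pdm α (cosInt σ (fun t => -(2 * π * ∑ i, u i * t i))) x =
      cosInt (fun t => (∏ i, (2 * π * t i) ^ α i) * σ t)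
        (fun t => -(2 * π * ∑ i, x i * t i) - (∑ i, α i : ℕ) * (π / 2)) u := by
    intro u
    rw [(pdm_cosInt α (N := ∑ i, α i) hσ (by fun_prop) (by rwa [← two_mul])).1]
    refine integral_congr_ae (Eventually.of_forall fun t => ?_)
    simp only
    rw [← Real.cos_neg]
    congr 2
    ring
  have h3 := (pdm_cosInt α (N := ∑ i, α i) (φ := fun _ => 0) hσ (by fun_prop)
    (by rwa [← two_mul])).2
  simp only [h1, h2]
  rw [(pdm_cosInt α (N := 0) (by fun_prop) (by fun_prop) (by simpa using h3)).1, cosInt,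
    ← integral_const_mul]
  refine integral_congr_ae (Eventually.of_forall fun t => ?_)
  simp only
  have h4 : 2 * π * ∑ i, x i * t i + (-(2 * π * ∑ i, x i * t i) - (∑ i, α i : ℕ) * (π / 2)
      + (∑ i, α i : ℕ) * (π / 2)) = 0 := by ring
  rw [h4, Real.cos_zero, mul_one, ← mul_assoc, ← mul_assoc, ← Finset.prod_mul_distrib,
    Finset.mul_sum, ← Finset.prod_pow_eq_pow_sum, ← Finset.prod_mul_distrib]
  congr 1
  refine Finset.prod_congr rfl fun i _ => ?_
  ring

/-! ### Plane waves and their covariances -/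

/-- Any family of values of an isonormal process is a centered Gaussian process, since a linear
combination of values is again a value. The family need only agree almost surely with these values. -/
lemma isCenteredGaussianProcess_of_isonormal {Ω H ι : Type*} [MeasurableSpace Ω] {P : Measure Ω}
    [NormedAddCommGroup H] [InnerProductSpace ℝ H] {W : H →ₗᵢ[ℝ] Lp ℝ 2 P}
    (hW : ∀ h, P.map (W h) = gaussianReal 0 (‖h‖₊ ^ 2)) (g : ι → H) {f : ι → Ω → ℝ}
    (hf : ∀ i, f i =ᵐ[P] W (g i)) : IsCenteredGaussianProcess P f := by
  intro m x a
  refine ⟨‖∑ i, a i • g (x i)‖₊ ^ 2, ?_⟩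
  rw [← hW]
  refine Measure.map_congr ?_
  have h1 : ∀ᵐ ω ∂P, ∀ i, (a i • W (g (x i)) : Lp ℝ 2 P) ω = a i * f (x i) ω := by
    rw [eventually_all]
    intro i
    filter_upwards [Lp.coeFn_smul (a i) (W (g (x i))), hf (x i)] with ω h1 h2
    rw [h1, Pi.smul_apply, h2, smul_eq_mul]
  simp only [map_sum, map_smul]
  filter_upwards [Lp.coeFn_finsetSum Finset.univ (fun i => a i • W (g (x i))), h1] with ω h1 h2
  rw [h1, Finset.sum_apply]
  exact Finset.sum_congr rfl fun i _ => (h2 i).symm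

lemma integral_mul_eq_inner_of_isometry {Ω H : Type*} [MeasurableSpace Ω] {P : Measure Ω}
    [NormedAddCommGroup H] [InnerProductSpace ℝ H] (W : H →ₗᵢ[ℝ] Lp ℝ 2 P) {g h : H}
    {X Y : Ω → ℝ} (hX : X =ᵐ[P] W g) (hY : Y =ᵐ[P] W h) :
    ∫ ω, X ω * Y ω ∂P = inner ℝ g h := by
  rw [← W.inner_map_map, L2.inner_def]
  refine integral_congr_ae ?_
  filter_upwards [hX, hY] with ω h1 h2
  rw [h1, h2]
  simp [mul_comm]

/-- The plane wave `t ↦ a(t) e^{2πi x·t}` with amplitude `a`. The isonormal process evaluated at it is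
a stationary field at `x`, with spectral density `a²`. -/
def wave {n : ℕ} (a : En n → ℝ) (x : En n) (t : En n) : ℂ :=
  (a t : ℂ) * Complex.exp (((2 * π * ∑ i, x i * t i : ℝ) : ℂ) * Complex.I)

lemma memLp_wave {n : ℕ} {a : En n → ℝ} (ha : MemLp a 2) (x : En n) : MemLp (wave a x) 2 := by
  have hm := ha.1
  refine ha.mono (by unfold wave; fun_prop) (Eventually.of_forall fun t => ?_)
  rw [wave, norm_mul, Complex.norm_exp_ofReal_mul_I, mul_one, Complex.norm_real]

lemma inner_wave {n : ℕ} {a : En n → ℝ} (ha : MemLp a 2) (x y : En n) :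
    inner ℝ (memLp_wave ha x).toLp (memLp_wave ha y).toLp =
      ∫ t : En n, a t ^ 2 * Real.cos (2 * π * ∑ i, (x i - y i) * t i) := by
  rw [L2.inner_def]
  refine integral_congr_ae ?_
  filter_upwards [(memLp_wave ha x).coeFn_toLp, (memLp_wave ha y).coeFn_toLp] with t h1 h2
  rw [h1, h2]
  have h3 : 2 * π * ∑ i, (x i - y i) * t i =
      2 * π * ∑ i, x i * t i - 2 * π * ∑ i, y i * t i := by
    simp only [sub_mul, Finset.sum_sub_distrib]
    ring
  rw [h3, Real.cos_sub, Complex.inner]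
  simp only [wave, Complex.mul_re, Complex.mul_im, Complex.conj_re, Complex.conj_im,
    Complex.exp_ofReal_mul_I_re, Complex.exp_ofReal_mul_I_im, Complex.ofReal_re, Complex.ofReal_im]
  ring

lemma wave_sub {n : ℕ} {a b : En n → ℝ} (ha : MemLp a 2) (hb : MemLp b 2) (x : En n) :
    (memLp_wave (hb.sub ha) x).toLp = (memLp_wave hb x).toLp - (memLp_wave ha x).toLp := by
  rw [← MemLp.toLp_sub]
  refine MemLp.toLp_congr _ _ (Eventually.of_forall fun t => ?_)
  simp [wave, sub_mul]

/-- For an even density the sine part of the Fourier integral vanishes, which leaves the cosine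
transform. -/
lemma ofReal_integral_cos_eq {n : ℕ} {σ : En n → ℝ} (hσ : Integrable σ)
    (heven : ∀ t, σ (-t) = σ t) (x y : En n) :
    ((∫ t : En n, σ t * Real.cos (2 * π * ∑ i, (x i - y i) * t i) : ℝ) : ℂ) =
      ∫ t : En n, Complex.exp (2 * (Real.pi : ℂ) * Complex.I *
          ((∑ i, (x i - y i) * t i : ℝ) : ℂ)) * (σ t : ℂ) := by
  have hm := hσ.1
  have hc : Integrable fun t : En n => σ t * Real.cos (2 * π * ∑ i, (x i - y i) * t i) :=
    hσ.mono (by fun_prop) (Eventually.of_forall fun t => by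
      rw [norm_mul]
      exact mul_le_of_le_one_right (norm_nonneg _) (Real.abs_cos_le_one _))
  have hs : Integrable fun t : En n => σ t * Real.sin (2 * π * ∑ i, (x i - y i) * t i) :=
    hσ.mono (by fun_prop) (Eventually.of_forall fun t => by
      rw [norm_mul]
      exact mul_le_of_le_one_right (norm_nonneg _) (Real.abs_sin_le_one _))
  have hs0 : ∫ t : En n, σ t * Real.sin (2 * π * ∑ i, (x i - y i) * t i) = 0 := by
    have h := integral_neg_eq_self
      (fun t : En n => σ t * Real.sin (2 * π * ∑ i, (x i - y i) * t i)) volume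
    simp only [heven, PiLp.neg_apply, mul_neg, Finset.sum_neg_distrib, Real.sin_neg,
      integral_neg] at h
    linarith
  have h1 : ∀ t : En n, Complex.exp (2 * (Real.pi : ℂ) * Complex.I *
      ((∑ i, (x i - y i) * t i : ℝ) : ℂ)) * (σ t : ℂ) =
      ((σ t * Real.cos (2 * π * ∑ i, (x i - y i) * t i) : ℝ) : ℂ) +
      ((σ t * Real.sin (2 * π * ∑ i, (x i - y i) * t i) : ℝ) : ℂ) * Complex.I := by
    intro t
    have h2 : 2 * (Real.pi : ℂ) * Complex.I * ((∑ i, (x i - y i) * t i : ℝ) : ℂ) =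
        ((2 * π * ∑ i, (x i - y i) * t i : ℝ) : ℂ) * Complex.I := by
      push_cast
      ring
    rw [h2, Complex.exp_mul_I]
    push_cast
    ring
  simp only [h1]
  rw [integral_add hc.ofReal (hs.ofReal.mul_const _), integral_mul_const,
    integral_complex_ofReal, integral_complex_ofReal, hs0]
  simp

lemma memLp_sqrt {n : ℕ} {ρ : En n → ℝ} (hm : Measurable ρ) (hpos : ∀ t, 0 ≤ ρ t)
    (hint : Integrable ρ) : MemLp (fun t => √(ρ t)) 2 := by
  rw [memLp_two_iff_integrable_sq (by fun_prop)]
  simpa only [Real.sq_sqrt (hpos _)] using hint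

/-- The moments of the difference density are finite by `(√ρ₂ - √ρ₁)² ≤ ρ₁ + ρ₂` and
`(1 + |t|)² ≤ 2 (1 + |t|²)`. -/
lemma integrable_weight_sqrt_sub {n k m : ℕ} (hm : m ≤ k + 1) {ρ₁ ρ₂ : En n → ℝ}
    (hmeas₁ : Measurable ρ₁) (hmeas₂ : Measurable ρ₂)
    (hpos₁ : ∀ t, 0 ≤ ρ₁ t) (hpos₂ : ∀ t, 0 ≤ ρ₂ t)
    (hmom₁ : Integrable (fun t => (1 + ‖t‖ ^ 2) ^ (k + 1) * ρ₁ t))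
    (hmom₂ : Integrable (fun t => (1 + ‖t‖ ^ 2) ^ (k + 1) * ρ₂ t)) :
    Integrable fun t => (1 + ‖t‖) ^ (2 * m) * (√(ρ₂ t) - √(ρ₁ t)) ^ 2 := by
  refine ((hmom₁.add hmom₂).const_mul (2 ^ (k + 1))).mono' (by fun_prop)
    (Eventually.of_forall fun t => ?_)
  rw [Real.norm_of_nonneg (by positivity)]
  have h1 : (√(ρ₂ t) - √(ρ₁ t)) ^ 2 ≤ ρ₁ t + ρ₂ t := by
    nlinarith [Real.sq_sqrt (hpos₁ t), Real.sq_sqrt (hpos₂ t),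
      mul_nonneg (Real.sqrt_nonneg (ρ₁ t)) (Real.sqrt_nonneg (ρ₂ t))]
  have h2 : (1 + ‖t‖) ^ (2 * m) ≤ 2 ^ (k + 1) * (1 + ‖t‖ ^ 2) ^ (k + 1) := by
    calc (1 + ‖t‖) ^ (2 * m) ≤ (1 + ‖t‖) ^ (2 * (k + 1)) :=
          pow_le_pow_right₀ (by linarith [norm_nonneg t]) (by omega)
      _ = ((1 + ‖t‖) ^ 2) ^ (k + 1) := pow_mul _ _ _
      _ ≤ (2 * (1 + ‖t‖ ^ 2)) ^ (k + 1) :=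
          pow_le_pow_left₀ (by positivity) (by nlinarith [sq_nonneg (1 - ‖t‖)]) _
      _ = _ := mul_pow _ _ _
  calc (1 + ‖t‖) ^ (2 * m) * (√(ρ₂ t) - √(ρ₁ t)) ^ 2
      ≤ (2 ^ (k + 1) * (1 + ‖t‖ ^ 2) ^ (k + 1)) * (ρ₁ t + ρ₂ t) := by gcongr
    _ = _ := by simp only [Pi.add_apply]; ring

/-! ### The coupling -/

theorem stmt2 (n k : ℕ) (hn : 1 ≤ n) (ρ₁ ρ₂ : En n → ℝ)
    (hmeas₁ : Measurable ρ₁) (hmeas₂ : Measurable ρ₂)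
    (hpos₁ : ∀ t, 0 ≤ ρ₁ t) (hpos₂ : ∀ t, 0 ≤ ρ₂ t)
    (heven₁ : ∀ t, ρ₁ (-t) = ρ₁ t) (heven₂ : ∀ t, ρ₂ (-t) = ρ₂ t)
    (hint₁ : Integrable ρ₁) (hint₂ : Integrable ρ₂)
    (hmom₁ : Integrable (fun t => (1 + ‖t‖ ^ 2) ^ (k + 1) * ρ₁ t))
    (hmom₂ : Integrable (fun t => (1 + ‖t‖ ^ 2) ^ (k + 1) * ρ₂ t)) :
    ∃ (Ω : Type) (_ : MeasurableSpace Ω) (P : Measure Ω), IsProbabilityMeasure P ∧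
    ∃ f₁ f₂ : En n → Ω → ℝ,
      JointlyGaussian P f₁ f₂ ∧
      -- (i) the two fields have the prescribed spectral densities
      (∀ x y : En n, (↑(∫ ω, f₁ x ω * f₁ y ω ∂P) : ℂ) =
        ∫ t : En n, Complex.exp (2 * (Real.pi : ℂ) * Complex.I *
          ((∑ i, (x i - y i) * t i : ℝ) : ℂ)) * (ρ₁ t : ℂ)) ∧
      (∀ x y : En n, (↑(∫ ω, f₂ x ω * f₂ y ω ∂P) : ℂ) =
        ∫ t : En n, Complex.exp (2 * (Real.pi : ℂ) * Complex.I *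
          ((∑ i, (x i - y i) * t i : ℝ) : ℂ)) * (ρ₂ t : ℂ)) ∧
      -- (ii) the difference is a centered Gaussian process with spectral density
      -- `(√ρ₂ - √ρ₁)²`
      IsCenteredGaussianProcess P (fun x ω => f₂ x ω - f₁ x ω) ∧
      (∀ x y : En n, (↑(∫ ω, (f₂ x ω - f₁ x ω) * (f₂ y ω - f₁ y ω) ∂P) : ℂ) =
        ∫ t : En n, Complex.exp (2 * (Real.pi : ℂ) * Complex.I *
          ((∑ i, (x i - y i) * t i : ℝ) : ℂ)) *
          (((Real.sqrt (ρ₂ t) - Real.sqrt (ρ₁ t)) ^ 2 : ℝ) : ℂ)) ∧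
      -- mixed derivatives of the covariance kernel of the difference on the diagonal
      (∀ α : Fin n → ℕ, (∑ i, α i) ≤ k + 1 → ∀ x : En n,
        mdd α (fun u v => ∫ ω, (f₂ u ω - f₁ u ω) * (f₂ v ω - f₁ v ω) ∂P) x =
          (2 * Real.pi) ^ (2 * ∑ i, α i) *
            ∫ t : En n, (∏ i, t i ^ (2 * α i)) *
              (Real.sqrt (ρ₂ t) - Real.sqrt (ρ₁ t)) ^ 2) := by
  have ha₁ := memLp_sqrt hmeas₁ hpos₁ hint₁
  have ha₂ := memLp_sqrt hmeas₂ hpos₂ hint₂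
  obtain ⟨Ω, mΩ, P, hP, W, hW⟩ := exists_isonormal (Lp ℂ 2 (volume : Measure (En n)))
  let g₁ : En n → Lp ℂ 2 (volume : Measure (En n)) := fun x => (memLp_wave ha₁ x).toLp
  let g₂ : En n → Lp ℂ 2 (volume : Measure (En n)) := fun x => (memLp_wave ha₂ x).toLp
  let g : En n → Lp ℂ 2 (volume : Measure (En n)) := fun x => (memLp_wave (ha₂.sub ha₁) x).toLp
  have hF : ∀ x, (fun ω => W (g₂ x) ω - W (g₁ x) ω) =ᵐ[P] W (g x) := fun x => by
    have h : W (g x) = W (g₂ x) - W (g₁ x) := by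
      rw [← map_sub]
      exact congrArg W (wave_sub ha₁ ha₂ x)
    rw [h]
    exact (Lp.coeFn_sub _ _).symm
  have hC : ∀ x y, ∫ ω, (W (g₂ x) ω - W (g₁ x) ω) * (W (g₂ y) ω - W (g₁ y) ω) ∂P =
      ∫ t : En n, (√(ρ₂ t) - √(ρ₁ t)) ^ 2 * Real.cos (2 * π * ∑ i, (x i - y i) * t i) :=
    fun x y => (integral_mul_eq_inner_of_isometry W (hF x) (hF y)).trans
      (inner_wave (ha₂.sub ha₁) x y)
  refine ⟨Ω, mΩ, P, hP, fun x => W (g₁ x), fun x => W (g₂ x), ?_, fun x y => ?_, fun x y => ?_,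
    ?_, fun x y => ?_, fun α hα x => ?_⟩
  · refine isCenteredGaussianProcess_of_isonormal hW (Sum.elim g₁ g₂) ?_
    rintro (i | i) <;> rfl
  · rw [integral_mul_eq_inner_of_isometry W (ae_eq_refl _) (ae_eq_refl _), inner_wave ha₁]
    simp only [Real.sq_sqrt (hpos₁ _)]
    exact ofReal_integral_cos_eq hint₁ heven₁ x y
  · rw [integral_mul_eq_inner_of_isometry W (ae_eq_refl _) (ae_eq_refl _), inner_wave ha₂]
    simp only [Real.sq_sqrt (hpos₂ _)]
    exact ofReal_integral_cos_eq hint₂ heven₂ x y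
  · exact isCenteredGaussianProcess_of_isonormal hW g hF
  · rw [hC]
    exact ofReal_integral_cos_eq (ha₂.sub ha₁).integrable_sq
      (fun t => by simp only [Pi.sub_apply, heven₁, heven₂]) x y
  · refine (congrArg (fun K => mdd α K x) (funext₂ hC)).trans ?_
    exact mdd_cosInt α (by fun_prop)
      (integrable_weight_sqrt_sub hα hmeas₁ hmeas₂ hpos₁ hpos₂ hmom₁ hmom₂) x

end
end

section
/- Let n ≥ 1, k ≥ 0 be integers. There is a constant C, depending only on n and k, with the following property. Let ρ₁, ρ₂ be symmetric Borel probability measures on ℝⁿ with finite moments of order 2(k+1), and let ρ be any coupling of ρ₁ and ρ₂ on ℝⁿ × ℝⁿ that is symmetric under (s,t) ↦ (−s,−t). Then there exist a probability space and jointly Gaussian centered Gaussian processes f₁, f₂ on ℝⁿ such that E[f_j(x) f_j(y)] = ∫ e^{2πi (x−y)·t} dρ_j(t) for j = 1,2, E[f₁(x) f₂(y)] = ∫_{ℝⁿ×ℝⁿ} e^{2πi (x·s − y·t)} dρ(s,t), and the covariance kernel C_F(x,y) = E[(f₂−f₁)(x)(f₂−f₁)(y)] of the difference satisfies, for every R >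 0, sup_{|x| ≤ R+1} max_{|α| ≤ k+1} ∂^α_x ∂^α_y C_F(x,y)|_{y=x} ≤ C (R² + 1) ∫_{ℝⁿ×ℝⁿ} (|s|² + |t|² + 1)^{k+1} |s − t|² dρ(s,t). -/
/-!
Real waves suffice as spectral representation: against a symmetric measure `ρ` on pairs `(s, t)`,
the functions `√2 cos (2π ⟨x, s⟩ - π / 4)` and `√2 cos (2π ⟨y, t⟩ - π / 4)` have the same `L²(ρ)`
inner product as the characters `exp (2πi ⟨x, s⟩)` and `exp (2πi ⟨y, t⟩)`
(`integral_wave_mul_wave`). The processes `f₁ x`, `f₂ x` are the images of the waves of frequency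
`s`, resp. `t`, under one isonormal process `L²(ρ) → L²(P)` (`exists_isonormal`), which makes them
jointly Gaussian with the prescribed covariances.

The covariance kernel of `f₂ - f₁` is then `∫ φ_x φ_y dρ`, where `φ_x(s, t)` is the difference of the
two waves. The moments of order `2 (k + 1)` allow differentiation under the integral up to order
`k + 1` in each variable, so the mixed derivative on the diagonal is `∫ (∂^α φ_x)² dρ`
(`exists_mdd_eq`). The estimate follows from a pointwise bound of the integrand: `∂^α φ_x` is a
difference of two values of a monomial of degree `|α|` times a cosine with phase `2π ⟨x, ·⟩`, hence
of size at most `const * (|s|² + |t|² + 1)^(|α| / 2) * |s - t| * (1 + |x|)` (`waveDiff_sq_le`).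
-/

open MeasureTheory ProbabilityTheory Real Filter

noncomputable section

/-! ### Isonormal Gaussian processes -/

/-- On `L²` of a probability space, the characteristic function of the law is Lipschitz in the
random variable; hence the laws of an `L²`-convergent family converge. -/
theorem norm_charFun_map_sub_le {Ω : Type*} [MeasurableSpace Ω] {P : Measure Ω}
    [IsProbabilityMeasure P] (X Y : Lp ℝ 2 P) (t : ℝ) :
    ‖charFun (P.map X) t - charFun (P.map Y) t‖ ≤ |t| * ‖X - Y‖ := by
  have hX : AEMeasurable X P := (Lp.aestronglyMeasurable X).aemeasurable
  have hY : AEMeasurable Y P := (Lp.aestronglyMeasurable Y).aemeasurable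
  have key (Z : Lp ℝ 2 P) : Integrable (fun ω => Complex.exp (t * Z ω * Complex.I)) P := by
    have hZ : AEMeasurable Z P := (Lp.aestronglyMeasurable Z).aemeasurable
    refine Integrable.of_bound (C := 1) ?_ (ae_of_all _ fun ω => ?_)
    · exact AEMeasurable.aestronglyMeasurable (by fun_prop)
    · rw [← Complex.ofReal_mul, Complex.norm_exp_ofReal_mul_I]
  rw [charFun_apply_real, charFun_apply_real, integral_map hX (by fun_prop),
    integral_map hY (by fun_prop), ← integral_sub (key X) (key Y)]
  have hint : Integrable (fun ω => ‖(X - Y : Lp ℝ 2 P) ω‖) P :=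
    ((Lp.memLp (X - Y)).integrable (by norm_num)).norm
  calc _ ≤ ∫ ω, |t| * ‖(X - Y : Lp ℝ 2 P) ω‖ ∂P := by
        refine norm_integral_le_of_norm_le (hint.const_mul _) ?_
        filter_upwards [Lp.coeFn_sub X Y] with ω hω
        rw [hω, Pi.sub_apply]
        have : Complex.exp (t * X ω * Complex.I) - Complex.exp (t * Y ω * Complex.I)
            = Complex.exp (((t * Y ω : ℝ) : ℂ) * Complex.I) *
              (Complex.exp (Complex.I * ((t * (X ω - Y ω) : ℝ) : ℂ)) - 1) := by
          rw [mul_sub, ← Complex.exp_add, mul_one]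
          push_cast
          ring_nf
        rw [this, norm_mul, Complex.norm_exp_ofReal_mul_I, one_mul]
        refine norm_exp_I_mul_ofReal_sub_one_le.trans ?_
        rw [norm_mul, Real.norm_eq_abs]
    _ = |t| * ∫ ω, ‖(X - Y : Lp ℝ 2 P) ω‖ ∂P := integral_const_mul _ _
    _ ≤ |t| * ‖X - Y‖ := by
        gcongr
        rw [integral_norm_eq_lintegral_enorm (Lp.aestronglyMeasurable _), Lp.norm_def,
          ← eLpNorm_one_eq_lintegral_enorm]
        exact ENNReal.toReal_mono (Lp.eLpNorm_ne_top _)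
          (eLpNorm_le_eLpNorm_of_exponent_le (by norm_num) (Lp.aestronglyMeasurable _))

/-! ### The wave functions and their derivatives -/

/-- The derivative `∂^α` is an iteration of `|α|` first-order partial derivatives along a list of
directions. -/
theorem exists_dirs {n : ℕ} (α : Fin n → ℕ) :
    ∃ L : List (Fin n), L.length = ∑ i, α i ∧ ∀ f, pdm α f = L.foldr pd f := by
  refine ⟨((List.finRange n).map fun i => List.replicate (α i) i).flatten, ?_, fun f => ?_⟩
  · simp [List.length_flatten, List.map_map, Function.comp_def, Fin.sum_univ_def]
  · unfold pdm
    rw [List.ofFn_eq_map]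
    induction List.finRange n with
    | nil => simp
    | cons i l ih =>
      simp only [List.map_cons, List.foldr_cons, List.flatten_cons, List.foldr_append,
        Function.comp_apply, ih]
      generalize List.foldr pd f _ = g
      induction α i with
      | zero => simp
      | succ m ihm => rw [Function.iterate_succ_apply', ihm, List.replicate_succ, List.foldr_cons]

/-- The derivative in `x`, along the directions listed in `L`, of the wave
`x ↦ √2 cos (2π ⟨x, t⟩ - π / 4)`: each derivative brings down a factor `2π tᵢ` and advances the
phase by `π / 2`. -/
def waveD {n : ℕ} (L : List (Fin n)) (x t : En n) : ℝ :=
  (L.map fun i => t i).prod *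
    (√2 * (2 * π) ^ L.length * cos (2 * π * inner ℝ x t - π / 4 + L.length * (π / 2)))

/-- The `L`-derivative of the wave of frequency `p.2` minus that of the wave of frequency `p.1`. For `L = []`
it is the vector of `L²(ρ)` representing `f₂ x - f₁ x`. -/
def waveDiff {n : ℕ} (L : List (Fin n)) (x : En n) (p : En n × En n) : ℝ :=
  waveD L x p.2 - waveD L x p.1

theorem hasDerivAt_waveD {n : ℕ} (L : List (Fin n)) (i : Fin n) (x t : En n) (r : ℝ) :
    HasDerivAt (fun r : ℝ => waveD L (x + r • EuclideanSpace.single i (1 : ℝ)) t)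
      (waveD (i :: L) (x + r • EuclideanSpace.single i (1 : ℝ)) t) r := by
  have hin (r : ℝ) : inner ℝ (x + r • EuclideanSpace.single i (1 : ℝ)) t
      = inner ℝ x t + r * t i := by
    simp [inner_add_left, inner_smul_left, EuclideanSpace.inner_single_left]
  simp only [waveD, hin, List.map_cons, List.prod_cons, List.length_cons]
  have h1 : HasDerivAt (fun r : ℝ =>
      2 * π * (inner ℝ x t + r * t i) - π / 4 + L.length * (π / 2)) (2 * π * t i) r := by
    have := ((((hasDerivAt_id r).mul_const (t i)).const_add (inner ℝ x t)).const_mul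
      (2 * π)).sub_const (π / 4) |>.add_const ((L.length : ℝ) * (π / 2))
    simpa using this
  have h2 := (h1.cos.const_mul (√2 * (2 * π) ^ L.length)).const_mul (L.map fun i => t i).prod
  refine h2.congr_deriv ?_
  have : 2 * π * (inner ℝ x t + r * t i) - π / 4 + ((L.length + 1 : ℕ) : ℝ) * (π / 2)
      = (2 * π * (inner ℝ x t + r * t i) - π / 4 + L.length * (π / 2)) + π / 2 := by
    push_cast; ring
  rw [this, cos_add_pi_div_two]
  ring

/-! ### Pointwise bounds -/

theorem continuous_monomial {n : ℕ} (L : List (Fin n)) :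
    Continuous fun t : En n => (L.map fun i => t i).prod := by
  induction L with
  | nil => simpa using continuous_const
  | cons i L ih =>
    simp only [List.map_cons, List.prod_cons]
    fun_prop

theorem continuous_waveD {n : ℕ} (L : List (Fin n)) (x : En n) : Continuous (waveD L x) := by
  have := continuous_monomial L
  unfold waveD
  fun_prop

theorem continuous_waveDiff {n : ℕ} (L : List (Fin n)) (x : En n) :
    Continuous (waveDiff L x) := by
  have := continuous_waveD L x
  unfold waveDiff
  fun_prop

theorem abs_monomial_le {n : ℕ} (L : List (Fin n)) {t : En n} {Q : ℝ} (ht : ‖t‖ ≤ Q) :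
    |(L.map fun i => t i).prod| ≤ Q ^ L.length := by
  induction L with
  | nil => simp
  | cons i L ih =>
    rw [List.map_cons, List.prod_cons, abs_mul, List.length_cons, pow_succ']
    have : |t i| ≤ Q := (PiLp.norm_apply_le t i).trans ht
    have := (abs_nonneg (t i)).trans this
    gcongr

theorem abs_waveD_le {n : ℕ} (L : List (Fin n)) (x t : En n) :
    |waveD L x t| ≤ √2 * (2 * π) ^ L.length * ‖t‖ ^ L.length := by
  have hπ := pi_pos
  have hK : 0 ≤ √2 * (2 * π) ^ L.length := by positivity
  unfold waveD
  rw [abs_mul, abs_mul, abs_of_nonneg hK, mul_comm]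
  exact mul_le_mul (mul_le_of_le_one_right hK (abs_cos_le_one _)) (abs_monomial_le L le_rfl)
    (abs_nonneg _) hK

/-- A monomial of degree `m` is Lipschitz with constant `m Q ^ m` on the ball of radius `Q ≥ 1`. -/
theorem abs_monomial_sub_le {n : ℕ} (L : List (Fin n)) {s t : En n} {Q : ℝ} (hQ : 1 ≤ Q)
    (hs : ‖s‖ ≤ Q) (ht : ‖t‖ ≤ Q) :
    |(L.map fun i => t i).prod - (L.map fun i => s i).prod| ≤
      L.length * Q ^ L.length * ‖s - t‖ := by
  induction L with
  | nil => simp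
  | cons i L ih =>
    simp only [List.map_cons, List.prod_cons, List.length_cons]
    have h1 : |t i - s i| ≤ ‖s - t‖ := by
      rw [norm_sub_rev]; exact PiLp.norm_apply_le (t - s) i
    have h2 : |s i| ≤ Q := (PiLp.norm_apply_le s i).trans hs
    have h3 := abs_monomial_le L ht
    calc _ = |(t i - s i) * (L.map fun i => t i).prod
            + s i * ((L.map fun i => t i).prod - (L.map fun i => s i).prod)| := by ring_nf
      _ ≤ |t i - s i| * |(L.map fun i => t i).prod|
            + |s i| * |(L.map fun i => t i).prod - (L.map fun i => s i).prod| := by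
          rw [← abs_mul, ← abs_mul]; exact abs_add_le _ _
      _ ≤ ‖s - t‖ * Q ^ L.length + Q * (L.length * Q ^ L.length * ‖s - t‖) := by gcongr
      _ ≤ ‖s - t‖ * Q ^ (L.length + 1) + Q * (L.length * Q ^ L.length * ‖s - t‖) := by
          gcongr ‖s - t‖ * ?_ + _
          exact pow_le_pow_right₀ hQ (Nat.le_succ _)
      _ = _ := by push_cast; ring

/-- The factor `‖p.1 - p.2‖` comes from splitting the difference of `monomial * cosine` into a
difference of monomials, contributing `L.length`, and one of phases, contributing `2π ‖x‖`. -/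
theorem abs_waveDiff_le {n : ℕ} (L : List (Fin n)) (x : En n) (p : En n × En n) {Q : ℝ}
    (hQ : 1 ≤ Q) (hs : ‖p.1‖ ≤ Q) (ht : ‖p.2‖ ≤ Q) :
    |waveDiff L x p| ≤
      √2 * (2 * π) ^ L.length * Q ^ L.length * ‖p.1 - p.2‖ * (L.length + 2 * π * ‖x‖) := by
  obtain ⟨s, t⟩ := p
  dsimp only at hs ht ⊢
  have hπ := pi_pos
  have hcos : |cos (2 * π * inner ℝ x t - π / 4 + L.length * (π / 2))
      - cos (2 * π * inner ℝ x s - π / 4 + L.length * (π / 2))| ≤ 2 * π * ‖x‖ * ‖s - t‖ := by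
    have := Real.lipschitzWith_cos.dist_le_mul
      (2 * π * inner ℝ x t - π / 4 + L.length * (π / 2))
      (2 * π * inner ℝ x s - π / 4 + L.length * (π / 2))
    rw [Real.dist_eq, Real.dist_eq] at this
    refine this.trans ?_
    have e : 2 * π * inner ℝ x t - π / 4 + L.length * (π / 2)
        - (2 * π * inner ℝ x s - π / 4 + L.length * (π / 2)) = 2 * π * inner ℝ x (t - s) := by
      rw [inner_sub_right]; ring
    rw [e, abs_mul, abs_of_pos (by positivity : 0 < 2 * π), NNReal.coe_one, one_mul, norm_sub_rev]
    rw [mul_assoc (2 * π)]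
    exact mul_le_mul_of_nonneg_left (abs_real_inner_le_norm x (t - s)) (by positivity)
  have h1 := abs_monomial_sub_le L hQ hs ht
  have h2 := abs_monomial_le L hs
  unfold waveDiff waveD
  set A := (L.map fun i => t i).prod
  set B := (L.map fun i => s i).prod
  set c := cos (2 * π * inner ℝ x t - π / 4 + L.length * (π / 2))
  set d := cos (2 * π * inner ℝ x s - π / 4 + L.length * (π / 2))
  set K := √2 * (2 * π) ^ L.length with hK
  have hK0 : 0 ≤ K := by positivity
  have hc : |c| ≤ 1 := abs_cos_le_one _
  calc |A * (K * c) - B * (K * d)| = K * |(A - B) * c + B * (c - d)| := by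
        rw [← abs_of_nonneg hK0, ← abs_mul, abs_of_nonneg hK0]; ring_nf
    _ ≤ K * (|A - B| * |c| + |B| * |c - d|) := by
        rw [← abs_mul, ← abs_mul]; gcongr; exact abs_add_le _ _
    _ ≤ K * (L.length * Q ^ L.length * ‖s - t‖ * 1
          + Q ^ L.length * (2 * π * ‖x‖ * ‖s - t‖)) := by gcongr
    _ = _ := by ring

/-- The pointwise form of the estimate of the theorem; `abs_waveDiff_le` is used with
`Q² = ‖p.1‖² + ‖p.2‖² + 1`. -/
theorem waveDiff_sq_le {n : ℕ} (k : ℕ) (L : List (Fin n)) (hL : L.length ≤ k + 1) {R : ℝ}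
    (x : En n) (hx : ‖x‖ ≤ R + 1) (p : En n × En n) :
    waveDiff L x p * waveDiff L x p ≤
      2 * (2 * π) ^ (2 * (k + 1)) * (2 * (k + 1) ^ 2 + 16 * π ^ 2) * (R ^ 2 + 1) *
        ((‖p.1‖ ^ 2 + ‖p.2‖ ^ 2 + 1) ^ (k + 1) * ‖p.1 - p.2‖ ^ 2) := by
  have hπ := pi_pos
  have hπ1 : 1 ≤ 2 * π := by linarith [pi_gt_three]
  set q := ‖p.1‖ ^ 2 + ‖p.2‖ ^ 2 + 1 with hq
  have hq1 : 1 ≤ q := by rw [hq]; nlinarith [sq_nonneg ‖p.1‖, sq_nonneg ‖p.2‖]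
  have hQ : 1 ≤ √q := by rwa [Real.one_le_sqrt]
  have hs : ‖p.1‖ ≤ √q := Real.le_sqrt_of_sq_le (by rw [hq]; nlinarith [sq_nonneg ‖p.2‖])
  have ht : ‖p.2‖ ≤ √q := Real.le_sqrt_of_sq_le (by rw [hq]; nlinarith [sq_nonneg ‖p.1‖])
  have hLr : (L.length : ℝ) ≤ k + 1 := by exact_mod_cast hL
  have h1 : |waveDiff L x p| ≤
      √2 * (2 * π) ^ (k + 1) * √q ^ (k + 1) * ‖p.1 - p.2‖ * ((k + 1) + 2 * π * ‖x‖) := by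
    refine (abs_waveDiff_le L x p hQ hs ht).trans ?_
    gcongr
  have h2 : ((k + 1) + 2 * π * ‖x‖) ^ 2 ≤ (2 * (k + 1) ^ 2 + 16 * π ^ 2) * (R ^ 2 + 1) := by
    have h3 : ‖x‖ ^ 2 ≤ 2 * (R ^ 2 + 1) := by
      nlinarith [norm_nonneg x, sq_nonneg (R - 1), pow_le_pow_left₀ (norm_nonneg x) hx 2]
    have h4 : ((k + 1) + 2 * π * ‖x‖) ^ 2 ≤ 2 * (k + 1) ^ 2 + 8 * π ^ 2 * ‖x‖ ^ 2 := by
      nlinarith [sq_nonneg (((k : ℝ) + 1) - 2 * π * ‖x‖)]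
    have h5 : 8 * π ^ 2 * ‖x‖ ^ 2 ≤ 8 * π ^ 2 * (2 * (R ^ 2 + 1)) := by gcongr
    nlinarith [mul_nonneg (sq_nonneg ((k : ℝ) + 1)) (sq_nonneg R)]
  calc waveDiff L x p * waveDiff L x p = |waveDiff L x p| ^ 2 := by rw [sq_abs, sq]
    _ ≤ (√2 * (2 * π) ^ (k + 1) * √q ^ (k + 1) * ‖p.1 - p.2‖ * ((k + 1) + 2 * π * ‖x‖)) ^ 2 := by
        gcongr
    _ = √2 ^ 2 * (2 * π) ^ (2 * (k + 1)) * (√q ^ 2) ^ (k + 1) * ‖p.1 - p.2‖ ^ 2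
          * ((k + 1) + 2 * π * ‖x‖) ^ 2 := by ring
    _ = 2 * (2 * π) ^ (2 * (k + 1)) * q ^ (k + 1) * ‖p.1 - p.2‖ ^ 2
          * ((k + 1) + 2 * π * ‖x‖) ^ 2 := by
        rw [Real.sq_sqrt (by norm_num), Real.sq_sqrt (by linarith)]
    _ ≤ 2 * (2 * π) ^ (2 * (k + 1)) * q ^ (k + 1) * ‖p.1 - p.2‖ ^ 2
          * ((2 * (k + 1) ^ 2 + 16 * π ^ 2) * (R ^ 2 + 1)) := by gcongr
    _ = _ := by ring

/-! ### Differentiation of the covariance kernel under the integral -/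

section Integrals

variable {n : ℕ} {k : ℕ} {ρ : Measure (En n × En n)}

/-- A square-integrable function dominating, up to constants and uniformly in `x`, all derivatives
of order at most `k + 1` of the difference of waves. -/
def envelope (k : ℕ) {n : ℕ} (p : En n × En n) : ℝ := 1 + ‖p.1‖ ^ (k + 1) + ‖p.2‖ ^ (k + 1)

theorem memLp_envelope [IsProbabilityMeasure ρ] (h1 : Integrable (fun p : En n × En n => ‖p.1‖ ^ (2 * (k + 1))) ρ)
    (h2 : Integrable (fun p : En n × En n => ‖p.2‖ ^ (2 * (k + 1))) ρ) :
    MemLp (envelope (n := n) k) 2 ρ := by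
  have hpow {g : En n × En n → ℝ} (hg : Continuous g)
      (h : Integrable (fun p => g p ^ (2 * (k + 1))) ρ) : MemLp (fun p => g p ^ (k + 1)) 2 ρ := by
    refine (memLp_two_iff_integrable_sq (f := fun p => g p ^ (k + 1))
      (by fun_prop)).2 (h.congr (ae_of_all _ fun p => ?_))
    ring
  have a1 := hpow (by fun_prop) h1
  have a2 := hpow (by fun_prop) h2
  have a0 : MemLp (fun _ : En n × En n => (1 : ℝ)) 2 ρ := memLp_const 1
  have a3 := (a0.add a1).add a2
  exact a3.congr_norm (Continuous.aestronglyMeasurable (by unfold envelope; fun_prop))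
    (ae_of_all _ fun p => by simp only [envelope, Pi.add_apply])

theorem abs_waveDiff_le_envelope (L : List (Fin n)) (hL : L.length ≤ k + 1) (x : En n)
    (p : En n × En n) :
    |waveDiff L x p| ≤ 2 * (√2 * (2 * π) ^ L.length) * envelope k p := by
  have hπ := pi_pos
  have hpow (t : En n) : ‖t‖ ^ L.length ≤ 1 + ‖t‖ ^ (k + 1) := by
    rcases le_total ‖t‖ 1 with h | h
    · have := pow_le_one₀ (norm_nonneg t) h (n := L.length)
      have : 0 ≤ ‖t‖ ^ (k + 1) := by positivity
      linarith
    · have := pow_le_pow_right₀ h hL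
      linarith
  unfold waveDiff envelope
  have h1 := abs_waveD_le L x p.1
  have h2 := abs_waveD_le L x p.2
  set K := √2 * (2 * π) ^ L.length
  have hK : 0 ≤ K := by positivity
  have h3 := mul_le_mul_of_nonneg_left (hpow p.1) hK
  have h4 := mul_le_mul_of_nonneg_left (hpow p.2) hK
  have h5 : 0 ≤ K * ‖p.1‖ ^ (k + 1) := by positivity
  have h6 : 0 ≤ K * ‖p.2‖ ^ (k + 1) := by positivity
  have := abs_sub (waveD L x p.2) (waveD L x p.1)
  linarith

theorem memLp_waveDiff (he : MemLp (envelope (n := n) k) 2 ρ) (L : List (Fin n))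
    (hL : L.length ≤ k + 1) (x : En n) : MemLp (waveDiff L x) 2 ρ :=
  he.of_le_mul (continuous_waveDiff L x).aestronglyMeasurable
    (c := 2 * (√2 * (2 * π) ^ L.length)) (ae_of_all _ fun p => by
      rw [Real.norm_eq_abs, Real.norm_eq_abs]
      refine (abs_waveDiff_le_envelope L hL x p).trans ?_
      have := pi_pos
      gcongr
      exact le_abs_self _)

theorem pd_integral_waveDiff (he : MemLp (envelope (n := n) k) 2 ρ) {w : En n × En n → ℝ}
    (hw : MemLp w 2 ρ) (L : List (Fin n)) (hL : L.length ≤ k) (i : Fin n) :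
    pd i (fun x => ∫ p, w p * waveDiff L x p ∂ρ) =
      fun x => ∫ p, w p * waveDiff (i :: L) x p ∂ρ := by
  funext x
  unfold pd
  have hL' : (i :: L).length ≤ k + 1 := by simpa using hL
  have := hasDerivAt_integral_of_dominated_loc_of_deriv_le (μ := ρ) (x₀ := (0 : ℝ))
    (F := fun r p => w p * waveDiff L (x + r • EuclideanSpace.single i (1 : ℝ)) p)
    (F' := fun r p => w p * waveDiff (i :: L) (x + r • EuclideanSpace.single i (1 : ℝ)) p)
    (bound := fun p => 2 * (√2 * (2 * π) ^ (i :: L).length) * (‖w p‖ * envelope k p))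
    (s := Set.univ) univ_mem
    (Eventually.of_forall fun r => hw.1.mul (continuous_waveDiff _ _).aestronglyMeasurable)
    (hw.integrable_mul (memLp_waveDiff he L (by omega) _))
    (hw.1.mul (continuous_waveDiff _ _).aestronglyMeasurable)
    (ae_of_all _ fun p r _ => by
      rw [norm_mul, Real.norm_eq_abs (waveDiff _ _ _)]
      refine (mul_le_mul_of_nonneg_left (abs_waveDiff_le_envelope (k := k) (i :: L) hL' _ p)
        (norm_nonneg _)).trans (le_of_eq (by ring)))
    ((hw.norm.integrable_mul he).const_mul _)
    (ae_of_all _ fun p r _ =>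
      ((hasDerivAt_waveD L i x p.2 r).sub (hasDerivAt_waveD L i x p.1 r)).const_mul (w p))
  simpa using this.2.deriv

theorem foldr_pd_integral_waveDiff (he : MemLp (envelope (n := n) k) 2 ρ)
    {w : En n × En n → ℝ} (hw : MemLp w 2 ρ) (L : List (Fin n)) (hL : L.length ≤ k + 1) :
    L.foldr pd (fun x => ∫ p, w p * waveDiff [] x p ∂ρ) =
      fun x => ∫ p, w p * waveDiff L x p ∂ρ := by
  induction L with
  | nil => rfl
  | cons i L ih =>
    rw [List.length_cons] at hL
    rw [List.foldr_cons, ih (by omega), pd_integral_waveDiff he hw L (by omega)]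

/-- The mixed derivative on the diagonal is the squared `L²(ρ)` norm of a derivative of order
`|α|` of the difference of waves. -/
theorem exists_mdd_eq (he : MemLp (envelope (n := n) k) 2 ρ) (α : Fin n → ℕ)
    (hα : ∑ i, α i ≤ k + 1) :
    ∃ L : List (Fin n), L.length ≤ k + 1 ∧ ∀ x,
      mdd α (fun u v => ∫ p, waveDiff [] u p * waveDiff [] v p ∂ρ) x =
        ∫ p, waveDiff L x p * waveDiff L x p ∂ρ := by
  obtain ⟨L, hlen, hpd⟩ := exists_dirs α
  have hL : L.length ≤ k + 1 := hlen ▸ hα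
  refine ⟨L, hL, fun x => ?_⟩
  unfold mdd
  simp_rw [hpd, fun u => foldr_pd_integral_waveDiff he (memLp_waveDiff he [] (by simp) u) L hL,
    mul_comm (waveDiff [] _ _)]
  rw [foldr_pd_integral_waveDiff he (memLp_waveDiff he L hL x) L hL]

theorem ofReal_mdd_le (he : MemLp (envelope (n := n) k) 2 ρ) (α : Fin n → ℕ)
    (hα : ∑ i, α i ≤ k + 1) {R : ℝ} (x : En n) (hx : ‖x‖ ≤ R + 1) :
    ENNReal.ofReal (mdd α (fun u v => ∫ p, waveDiff [] u p * waveDiff [] v p ∂ρ) x) ≤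
      ENNReal.ofReal
        (2 * (2 * π) ^ (2 * (k + 1)) * (2 * (k + 1) ^ 2 + 16 * π ^ 2) * (R ^ 2 + 1)) *
        ∫⁻ p : En n × En n, ENNReal.ofReal
          ((‖p.1‖ ^ 2 + ‖p.2‖ ^ 2 + 1) ^ (k + 1) * ‖p.1 - p.2‖ ^ 2) ∂ρ := by
  obtain ⟨L, hL, h⟩ := exists_mdd_eq he α hα
  have hG := memLp_waveDiff he L hL x
  have hint : Integrable (fun p => waveDiff L x p * waveDiff L x p) ρ := hG.integrable_mul hG
  rw [h, ofReal_integral_eq_lintegral_ofReal hint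
    (ae_of_all _ fun p => mul_self_nonneg _), ← lintegral_const_mul' _ _ ENNReal.ofReal_ne_top]
  refine lintegral_mono fun p => ?_
  rw [← ENNReal.ofReal_mul (by have := pi_pos; positivity)]
  exact ENNReal.ofReal_le_ofReal (waveDiff_sq_le k L hL x hx p)

/-! ### Covariances of the waves -/

theorem integral_eq_zero_of_odd (hsymm : ρ.map (fun p => (-p.1, -p.2)) = ρ)
    {g : En n × En n → ℝ} (hg : Continuous g) (hodd : ∀ p, g (-p) = -g p) :
    ∫ p, g p ∂ρ = 0 := by
  have h : ∫ p, g p ∂ρ = ∫ p, g (-p) ∂ρ := by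
    conv_lhs => rw [← hsymm]
    exact integral_map (by fun_prop) hg.aestronglyMeasurable
  simp_rw [hodd, integral_neg] at h
  linarith

/-- With the phase shift `π / 4`, the product of two waves is
`cos (2π (a - b)) + sin (2π (a + b))`. The sine is odd and integrates to zero against a symmetric
measure, as does the imaginary part of the exponential. -/
theorem integral_wave_mul_wave [IsProbabilityMeasure ρ] (hsymm : ρ.map (fun p => (-p.1, -p.2)) = ρ)
    {a b : En n × En n → ℝ} (ha : Continuous a) (hb : Continuous b)
    (hao : ∀ p, a (-p) = -a p) (hbo : ∀ p, b (-p) = -b p) :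
    ((∫ p, (√2 * cos (2 * π * a p - π / 4)) * (√2 * cos (2 * π * b p - π / 4)) ∂ρ : ℝ) : ℂ) =
      ∫ p, Complex.exp (2 * (π : ℂ) * Complex.I * ((a p - b p : ℝ) : ℂ)) ∂ρ := by
  have hint {g : En n × En n → ℝ} (hg : Continuous g) (hb : ∀ p, |g p| ≤ 1) : Integrable g ρ :=
    Integrable.of_bound hg.aestronglyMeasurable 1 (ae_of_all _ hb)
  have hcos : Integrable (fun p => cos (2 * π * (a p - b p))) ρ :=
    hint (by fun_prop) fun p => abs_cos_le_one _
  have hsin : Integrable (fun p => sin (2 * π * (a p - b p))) ρ :=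
    hint (by fun_prop) fun p => abs_sin_le_one _
  have hsin' : Integrable (fun p => sin (2 * π * (a p + b p))) ρ :=
    hint (by fun_prop) fun p => abs_sin_le_one _
  have h0 : ∫ p, sin (2 * π * (a p - b p)) ∂ρ = 0 :=
    integral_eq_zero_of_odd hsymm (by fun_prop) fun p => by
      rw [hao, hbo, ← sin_neg]; ring_nf
  have h0' : ∫ p, sin (2 * π * (a p + b p)) ∂ρ = 0 :=
    integral_eq_zero_of_odd hsymm (by fun_prop) fun p => by
      rw [hao, hbo, ← sin_neg]; ring_nf
  have hl (p) : (√2 * cos (2 * π * a p - π / 4)) * (√2 * cos (2 * π * b p - π / 4)) =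
      cos (2 * π * (a p - b p)) + sin (2 * π * (a p + b p)) := by
    have h2 : √2 * √2 = 2 := by norm_num
    rw [mul_sub, mul_add, cos_sub, sin_add, cos_sub, cos_sub, cos_pi_div_four, sin_pi_div_four]
    linear_combination (cos (2 * π * a p) + sin (2 * π * a p)) *
      (cos (2 * π * b p) + sin (2 * π * b p)) * (√2 * √2 + 2) / 4 * h2
  have hr (p) : Complex.exp (2 * (π : ℂ) * Complex.I * ((a p - b p : ℝ) : ℂ)) =
      ((cos (2 * π * (a p - b p)) : ℝ) : ℂ) +
        ((sin (2 * π * (a p - b p)) : ℝ) : ℂ) * Complex.I := by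
    rw [Complex.ofReal_cos, Complex.ofReal_sin, ← Complex.exp_mul_I]
    push_cast; ring_nf
  simp_rw [hl, hr]
  rw [integral_add hcos hsin', h0', integral_add hcos.ofReal (hsin.ofReal.mul_const _),
    integral_mul_const, integral_complex_ofReal, integral_complex_ofReal, h0]
  simp

end Integrals

/-! ### The coupled Gaussian processes -/

theorem isCenteredGaussianProcess_isonormal {Ω : Type*} [MeasurableSpace Ω] {P : Measure Ω}
    [IsProbabilityMeasure P] {H : Type*} [NormedAddCommGroup H] [InnerProductSpace ℝ H]
    (W : H →ₗᵢ[ℝ] Lp ℝ 2 P) (hW : ∀ h, P.map (W h) = gaussianReal 0 (‖h‖₊ ^ 2))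
    {ι : Type*} (h : ι → H) : IsCenteredGaussianProcess P (fun i => W (h i)) := by
  intro m x a
  refine ⟨‖∑ i, a i • h (x i)‖₊ ^ 2, ?_⟩
  rw [← hW]
  refine Measure.map_congr ?_
  have hall : ∀ᵐ ω ∂P, ∀ i, (a i • W (h (x i)) : Lp ℝ 2 P) ω = a i * W (h (x i)) ω := by
    rw [ae_all_iff]
    intro i
    filter_upwards [Lp.coeFn_smul (a i) (W (h (x i)))] with ω h1
    rw [h1, Pi.smul_apply, smul_eq_mul]
  filter_upwards [hall, Lp.coeFn_fun_finsetSum Finset.univ fun i => a i • W (h (x i))]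
    with ω h1 h2
  simp_rw [map_sum, map_smul, h2, h1]

theorem integral_isonormal_mul {Ω : Type*} [MeasurableSpace Ω] {P : Measure Ω}
    {H : Type*} [NormedAddCommGroup H] [InnerProductSpace ℝ H]
    (W : H →ₗᵢ[ℝ] Lp ℝ 2 P) (g h : H) : ∫ ω, W g ω * W h ω ∂P = inner ℝ g h := by
  rw [← W.inner_map_map, L2.inner_def]
  simp [mul_comm]

theorem inner_toLp {E : Type*} [MeasurableSpace E] {ρ : Measure E} {g h : E → ℝ}
    (hg : MemLp g 2 ρ) (hh : MemLp h 2 ρ) :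
    inner ℝ (hg.toLp g) (hh.toLp h) = ∫ p, g p * h p ∂ρ := by
  rw [L2.inner_def]
  refine integral_congr_ae ?_
  filter_upwards [hg.coeFn_toLp, hh.coeFn_toLp] with p h1 h2
  simp [h1, h2, mul_comm]

theorem waveD_nil {n : ℕ} (x t : En n) :
    waveD [] x t = √2 * cos (2 * π * inner ℝ x t - π / 4) := by
  simp [waveD]

theorem memLp_waveD_nil_comp {n : ℕ} {ρ : Measure (En n × En n)} [IsProbabilityMeasure ρ]
    (x : En n) {g : En n × En n → En n} (hg : Continuous g) :
    MemLp (fun p => waveD [] x (g p)) 2 ρ := by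
  refine MemLp.of_bound ((continuous_waveD [] x).comp hg).aestronglyMeasurable (√2)
    (ae_of_all _ fun p => ?_)
  simpa using abs_waveD_le [] x (g p)

theorem stmt4 (n k : ℕ) (hn : 1 ≤ n) :
    ∃ C : ℝ, ∀ (ρ₁ ρ₂ : Measure (En n)),
      IsProbabilityMeasure ρ₁ → IsProbabilityMeasure ρ₂ →
      ρ₁.map (fun t => -t) = ρ₁ → ρ₂.map (fun t => -t) = ρ₂ →
      Integrable (fun t => ‖t‖ ^ (2 * (k + 1))) ρ₁ →
      Integrable (fun t => ‖t‖ ^ (2 * (k + 1))) ρ₂ →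
      ∀ (ρ : Measure (En n × En n)),
        -- `ρ` is a symmetric coupling of `ρ₁` and `ρ₂`
        ρ.map Prod.fst = ρ₁ → ρ.map Prod.snd = ρ₂ →
        ρ.map (fun p => (-p.1, -p.2)) = ρ →
        ∃ (Ω : Type) (_ : MeasurableSpace Ω) (P : Measure Ω), IsProbabilityMeasure P ∧
        ∃ f₁ f₂ : En n → Ω → ℝ,
          JointlyGaussian P f₁ f₂ ∧
          (∀ x y : En n, (↑(∫ ω, f₁ x ω * f₁ y ω ∂P) : ℂ) =
            ∫ t : En n, Complex.exp (2 * (Real.pi : ℂ) * Complex.I *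
              ((∑ i, (x i - y i) * t i : ℝ) : ℂ)) ∂ρ₁) ∧
          (∀ x y : En n, (↑(∫ ω, f₂ x ω * f₂ y ω ∂P) : ℂ) =
            ∫ t : En n, Complex.exp (2 * (Real.pi : ℂ) * Complex.I *
              ((∑ i, (x i - y i) * t i : ℝ) : ℂ)) ∂ρ₂) ∧
          (∀ x y : En n, (↑(∫ ω, f₁ x ω * f₂ y ω ∂P) : ℂ) =
            ∫ p : En n × En n, Complex.exp (2 * (Real.pi : ℂ) * Complex.I *
              ((∑ i, x i * p.1 i - ∑ i, y i * p.2 i : ℝ) : ℂ)) ∂ρ) ∧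
          (∀ R : ℝ, 0 < R → ∀ x : En n, ‖x‖ ≤ R + 1 →
            ∀ α : Fin n → ℕ, (∑ i, α i) ≤ k + 1 →
            ENNReal.ofReal
              (mdd α (fun u v =>
                ∫ ω, (f₂ u ω - f₁ u ω) * (f₂ v ω - f₁ v ω) ∂P) x)
              ≤ ENNReal.ofReal (C * (R ^ 2 + 1)) *
                ∫⁻ p : En n × En n, ENNReal.ofReal
                  ((‖p.1‖ ^ 2 + ‖p.2‖ ^ 2 + 1) ^ (k + 1) * ‖p.1 - p.2‖ ^ 2) ∂ρ) := by
  refine ⟨2 * (2 * π) ^ (2 * (k + 1)) * (2 * (k + 1) ^ 2 + 16 * π ^ 2), ?_⟩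
  intro ρ₁ ρ₂ hp₁ hp₂ _ _ hm₁ hm₂ ρ hfst hsnd hsymm
  have hρ : IsProbabilityMeasure ρ :=
    have : IsProbabilityMeasure (ρ.map Prod.fst) := hfst ▸ hp₁
    Measure.isProbabilityMeasure_of_map Prod.fst
  subst hfst hsnd
  have hI₁ : Integrable (fun p : En n × En n => ‖p.1‖ ^ (2 * (k + 1))) ρ :=
    hm₁.comp_measurable measurable_fst
  have hI₂ : Integrable (fun p : En n × En n => ‖p.2‖ ^ (2 * (k + 1))) ρ :=
    hm₂.comp_measurable measurable_snd
  have he := memLp_envelope hI₁ hI₂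
  have hF₁ (x : En n) : MemLp (fun p : En n × En n => waveD [] x p.1) 2 ρ :=
    memLp_waveD_nil_comp x continuous_fst
  have hF₂ (x : En n) : MemLp (fun p : En n × En n => waveD [] x p.2) 2 ρ :=
    memLp_waveD_nil_comp x continuous_snd
  obtain ⟨Ω, mΩ, P, hP, W, hW⟩ := exists_isonormal (Lp ℝ 2 ρ)
  have hsum (x t : En n) : inner ℝ x t = ∑ i, x i * t i := by
    simp [PiLp.inner_apply, mul_comm]
  have hsub (x y t : En n) : ∑ i, (x i - y i) * t i = inner ℝ x t - inner ℝ y t := by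
    simp [hsum, sub_mul, Finset.sum_sub_distrib]
  have hcontE (x y : En n) : Continuous fun t : En n =>
      Complex.exp (2 * (π : ℂ) * Complex.I * ((∑ i, (x i - y i) * t i : ℝ) : ℂ)) := by
    fun_prop
  refine ⟨Ω, mΩ, P, hP, fun x => W ((hF₁ x).toLp _), fun x => W ((hF₂ x).toLp _),
    ?_, ?_, ?_, ?_, ?_⟩
  · have := isCenteredGaussianProcess_isonormal W hW
      (Sum.elim (fun x => (hF₁ x).toLp _) (fun x => (hF₂ x).toLp _))
    unfold JointlyGaussian
    convert this using 1
    funext z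
    cases z <;> rfl
  · intro x y
    rw [integral_isonormal_mul, inner_toLp, integral_map (by fun_prop)
      (hcontE x y).aestronglyMeasurable]
    simp_rw [waveD_nil, hsub]
    exact integral_wave_mul_wave hsymm (by fun_prop) (by fun_prop) (by simp) (by simp)
  · intro x y
    rw [integral_isonormal_mul, inner_toLp, integral_map (by fun_prop)
      (hcontE x y).aestronglyMeasurable]
    simp_rw [waveD_nil, hsub]
    exact integral_wave_mul_wave hsymm (by fun_prop) (by fun_prop) (by simp) (by simp)
  · intro x y
    rw [integral_isonormal_mul, inner_toLp]
    simp_rw [waveD_nil, ← hsum]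
    exact integral_wave_mul_wave hsymm (by fun_prop) (by fun_prop) (by simp) (by simp)
  · intro R _ x hx α hα
    have hdiff (u : En n) : (fun ω => W ((hF₂ u).toLp _) ω - W ((hF₁ u).toLp _) ω) =ᵐ[P]
        W (((hF₂ u).sub (hF₁ u)).toLp _) := by
      rw [MemLp.toLp_sub, map_sub]
      exact (Lp.coeFn_sub _ _).symm
    have hK : (fun u v : En n => ∫ ω, (W ((hF₂ u).toLp _) ω - W ((hF₁ u).toLp _) ω) *
          (W ((hF₂ v).toLp _) ω - W ((hF₁ v).toLp _) ω) ∂P) =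
        fun u v => ∫ p, waveDiff [] u p * waveDiff [] v p ∂ρ := by
      funext u v
      have h1 : ∫ ω, (W ((hF₂ u).toLp _) ω - W ((hF₁ u).toLp _) ω) *
          (W ((hF₂ v).toLp _) ω - W ((hF₁ v).toLp _) ω) ∂P =
          ∫ ω, W (((hF₂ u).sub (hF₁ u)).toLp _) ω * W (((hF₂ v).sub (hF₁ v)).toLp _) ω ∂P := by
        refine integral_congr_ae ?_
        filter_upwards [hdiff u, hdiff v] with ω h1 h2
        rw [h1, h2]
      rw [h1, integral_isonormal_mul, inner_toLp]
      rfl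
    rw [hK]
    exact ofReal_mdd_le he α hα x hx

end
end

section
/- Let n ≥ 1, k ≥ 0 be integers and let ρ be a finite Borel measure on ℝⁿ × ℝⁿ with ∫ (|s|² + |t|²)^{k+1} dρ(s,t) < ∞. Define C(x,y) = ∫_{ℝⁿ×ℝⁿ} (e^{2πi x·s} − e^{2πi x·t})(e^{−2πi y·s} − e^{−2πi y·t}) dρ(s,t). Then C is (k+1) times continuously differentiable in each of x and y, and for every multi-index α with |α| ≤ k+1 and every x ∈ ℝⁿ, ∂^α_x ∂^α_y C(x,y)|_{y=x} = (2π)^{2|α|} ∫_{ℝⁿ×ℝⁿ} | s^α e^{2πi x·s} − t^α e^{2πi x·t} |² dρ(s,t). -/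
/-!
With one variable fixed, `C` is, in the other one, a difference of Fourier transforms of complex
measures `H dρ`: it has the form `wint ρ H c 0`, with a weight `H` that is continuous and bounded. The
lemmas allow any continuous weight that is `O((1 + ‖p‖) ^ (k + 1))`.
Smoothness (`contDiff_wint`) is Mathlib's differentiability theorem for the Fourier transform.

For the formula on the diagonal, differentiation under the integral sign (`pdC_wint`) gives
`∂^α (wint ρ H c 0) = wint ρ H c α` for `|α| ≤ k + 1` (`pdmC_wint`). It is applied first in `y`, with
`c = -2πi` and the bounded weight `e^{2πi x·s} - e^{2πi x·t}`, and then in `x`, with `c = 2πi` and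
the weight produced by the first step, which grows at most like `‖p‖ ^ |α|`; this is why moments of
order `2 (k + 1)` are needed. At `y = x` the two factors are complex conjugates of each other, and
`(2πi)^|α| (-2πi)^|α| = (2π)^{2|α|}`.
-/

open MeasureTheory ProbabilityTheory Real Filter

noncomputable section

/-- Partial derivative in direction `i` (complex-valued functions). -/
def pdC {n : ℕ} (i : Fin n) (f : En n → ℂ) (x : En n) : ℂ :=
  deriv (fun t : ℝ => f (x + t • EuclideanSpace.single i (1 : ℝ))) 0

/-- Iterated partial derivative with multi-index `α`. -/
def pdmC {n : ℕ} (α : Fin n → ℕ) (f : En n → ℂ) : En n → ℂ :=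
  ((List.ofFn (fun i : Fin n => (pdC i)^[α i])).foldr (· ∘ ·) id) f

/-- Mixed derivative `∂^α_x ∂^α_y C(x,y)|_{y=x}`. -/
def mddC {n : ℕ} (α : Fin n → ℕ) (K : En n → En n → ℂ) (x : En n) : ℂ :=
  pdmC α (fun u => pdmC α (K u) x) x

/-! ### Monomials times characters -/

/-- The character `s ↦ exp (c x·s)`; it has modulus one when `c` is purely imaginary. -/
def expc {n : ℕ} (c : ℂ) (x s : En n) : ℂ := Complex.exp (c * ((∑ i, x i * s i : ℝ) : ℂ))

/-- `s^β exp (c x·s)`. -/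
def mexp {n : ℕ} (β : Fin n → ℕ) (c : ℂ) (x s : En n) : ℂ :=
  ((∏ i, s i ^ β i : ℝ) : ℂ) * expc c x s

/-- `c^|β| ∫ (s^β exp (c x·s) - t^β exp (c x·t)) H(s,t) dρ(s,t)`: the integral obtained by formally
taking the `β`-th partial derivative in `x` of the one with `β = 0` under the integral sign. -/
def wint {n : ℕ} (ρ : Measure (En n × En n)) (H : En n × En n → ℂ) (c : ℂ) (β : Fin n → ℕ)
    (x : En n) : ℂ :=
  ∫ p, c ^ (∑ i, β i) * (mexp β c x p.1 - mexp β c x p.2) * H p ∂ρ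

lemma norm_expc {n : ℕ} {c : ℂ} (hc : c.re = 0) (x s : En n) : ‖expc c x s‖ = 1 := by
  rw [expc, Complex.norm_exp]
  simp [Complex.mul_re, hc]

@[fun_prop]
lemma continuous_expc {n : ℕ} (c : ℂ) (x : En n) : Continuous (expc c x) := by
  unfold expc
  fun_prop

@[fun_prop]
lemma continuous_mexp {n : ℕ} (β : Fin n → ℕ) (c : ℂ) (x : En n) : Continuous (mexp β c x) := by
  unfold mexp
  fun_prop

lemma norm_mexp_le {n : ℕ} (β : Fin n → ℕ) {c : ℂ} (hc : c.re = 0) (x s : En n) {r : ℝ}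
    (hs : ‖s‖ ≤ r) : ‖mexp β c x s‖ ≤ (1 + r) ^ (∑ i, β i) := by
  rw [mexp, norm_mul, norm_expc hc, mul_one, Complex.norm_real, norm_prod,
    ← Finset.prod_pow_eq_pow_sum]
  refine Finset.prod_le_prod (fun _ _ => norm_nonneg _) fun i _ => ?_
  rw [norm_pow]
  refine pow_le_pow_left₀ (norm_nonneg _) ?_ _
  linarith [PiLp.norm_apply_le s i]

lemma norm_mexp_sub_le {n : ℕ} (β : Fin n → ℕ) {c : ℂ} (hc : c.re = 0) (x : En n)
    (p : En n × En n) :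
    ‖mexp β c x p.1 - mexp β c x p.2‖ ≤ 2 * (1 + ‖p‖) ^ (∑ i, β i) := by
  have h1 := norm_mexp_le β hc x p.1 (norm_fst_le p)
  have h2 := norm_mexp_le β hc x p.2 (norm_snd_le p)
  linarith [norm_sub_le (mexp β c x p.1) (mexp β c x p.2)]

lemma sum_add_single {n : ℕ} (β : Fin n → ℕ) (i : Fin n) (m : ℕ) :
    ∑ j, (β + (Pi.single i m : Fin n → ℕ)) j = (∑ j, β j) + m := by
  simp [Finset.sum_add_distrib]

lemma hasDerivAt_mexp {n : ℕ} (β : Fin n → ℕ) (c : ℂ) (x s : En n) (i : Fin n) (t : ℝ) :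
    HasDerivAt (fun t : ℝ => mexp β c (x + t • EuclideanSpace.single i (1 : ℝ)) s)
      (c * mexp (β + Pi.single i 1) c (x + t • EuclideanSpace.single i (1 : ℝ)) s) t := by
  have hsum : ∀ t : ℝ, (∑ j, (x + t • EuclideanSpace.single i (1 : ℝ)) j * s j)
      = (∑ j, x j * s j) + t * s i := by
    intro t
    simp [add_mul, Finset.sum_add_distrib]
  have hprod : (∏ j, s j ^ (β + (Pi.single i 1 : Fin n → ℕ)) j) = (∏ j, s j ^ β j) * s i := by
    simp only [Pi.add_apply, pow_add, Finset.prod_mul_distrib]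
    simp [Pi.single_apply]
  simp only [mexp, expc, hsum, hprod]
  have h1 : HasDerivAt (fun t : ℝ => (((∑ j, x j * s j) + t * s i : ℝ) : ℂ)) ((s i : ℝ) : ℂ) t := by
    have := (((hasDerivAt_id t).mul_const (s i)).const_add (∑ j, x j * s j)).ofReal_comp
    simpa using this
  refine (((h1.const_mul c).cexp).const_mul _).congr_deriv ?_
  push_cast
  ring

lemma integrable_one_add_norm_pow {n k : ℕ} {ρ : Measure (En n × En n)} [IsFiniteMeasure ρ]
    (hmom : Integrable (fun p : En n × En n => (‖p.1‖ ^ 2 + ‖p.2‖ ^ 2) ^ (k + 1)) ρ) :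
    Integrable (fun p : En n × En n => (1 + ‖p‖) ^ (2 * (k + 1))) ρ := by
  refine (((integrable_const (1 : ℝ)).add hmom).const_mul (2 ^ (k + 1) * 2 ^ k)).mono'
    (by fun_prop) (ae_of_all _ fun p => ?_)
  have h0 : 0 ≤ ‖p‖ := norm_nonneg p
  have hp : ‖p‖ ^ 2 ≤ ‖p.1‖ ^ 2 + ‖p.2‖ ^ 2 := by
    rw [Prod.norm_def]
    rcases max_choice ‖p.1‖ ‖p.2‖ with h | h <;> rw [h] <;> nlinarith [sq_nonneg ‖p.1‖, sq_nonneg ‖p.2‖]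
  rw [Real.norm_of_nonneg (by positivity), pow_mul]
  calc ((1 + ‖p‖) ^ 2) ^ (k + 1) ≤ (2 * (1 + (‖p.1‖ ^ 2 + ‖p.2‖ ^ 2))) ^ (k + 1) := by
        refine pow_le_pow_left₀ (by positivity) ?_ _
        nlinarith [sq_nonneg (1 - ‖p‖)]
    _ = 2 ^ (k + 1) * (1 + (‖p.1‖ ^ 2 + ‖p.2‖ ^ 2)) ^ (k + 1) := mul_pow _ _ _
    _ ≤ 2 ^ (k + 1) * (2 ^ k * (1 ^ (k + 1) + (‖p.1‖ ^ 2 + ‖p.2‖ ^ 2) ^ (k + 1))) := by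
        gcongr
        exact add_pow_le zero_le_one (by positivity) (k + 1)
    _ = _ := by simp [mul_assoc]

/-! ### Weighted exponential integrals -/

section Weighted

variable {n k : ℕ} {ρ : Measure (En n × En n)} {H : En n × En n → ℂ} {M : ℝ} {c : ℂ}

lemma integrable_of_le {E : Type*} [NormedAddCommGroup E]
    (hint : Integrable (fun p : En n × En n => (1 + ‖p‖) ^ (2 * (k + 1))) ρ)
    {f : En n × En n → E} (hf : AEStronglyMeasurable f ρ) (A : ℝ) {m : ℕ} (hm : m ≤ 2 * (k + 1))
    (hA : 0 ≤ A) (hb : ∀ p, ‖f p‖ ≤ A * (1 + ‖p‖) ^ m) : Integrable f ρ := by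
  refine (hint.const_mul A).mono' hf (ae_of_all _ fun p => (hb p).trans ?_)
  have : (1 : ℝ) ≤ 1 + ‖p‖ := by linarith [norm_nonneg p]
  gcongr

lemma norm_integrand_le (hb : ∀ p, ‖H p‖ ≤ M * (1 + ‖p‖) ^ (k + 1)) (hc : c.re = 0)
    (β : Fin n → ℕ) (m : ℕ) (x : En n) (p : En n × En n) :
    ‖c ^ m * (mexp β c x p.1 - mexp β c x p.2) * H p‖ ≤
      (2 * ‖c‖ ^ m * M) * (1 + ‖p‖) ^ ((∑ i, β i) + (k + 1)) := by
  rw [norm_mul, norm_mul, norm_pow, pow_add]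
  calc _ ≤ ‖c‖ ^ m * (2 * (1 + ‖p‖) ^ (∑ i, β i)) * (M * (1 + ‖p‖) ^ (k + 1)) := by
        gcongr
        · exact norm_mexp_sub_le β hc x p
        · exact hb p
    _ = _ := by ring

/-- Differentiation under the integral sign, dominated by a multiple of
`(1 + ‖p‖) ^ (2 * (k + 1))`. -/
lemma pdC_wint (hint : Integrable (fun p : En n × En n => (1 + ‖p‖) ^ (2 * (k + 1))) ρ)
    (hH : Continuous H) (hM : 0 ≤ M) (hb : ∀ p, ‖H p‖ ≤ M * (1 + ‖p‖) ^ (k + 1)) (hc : c.re = 0)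
    (β : Fin n → ℕ) (i : Fin n) (hβ : (∑ j, β j) + 1 ≤ k + 1) :
    pdC i (wint ρ H c β) = wint ρ H c (β + Pi.single i 1) := by
  funext x
  set γ : Fin n → ℕ := β + Pi.single i 1 with hγ
  have hγs : ∑ j, γ j = (∑ j, β j) + 1 := sum_add_single β i 1
  set e : En n := EuclideanSpace.single i (1 : ℝ) with he
  set F : (Fin n → ℕ) → ℝ → En n × En n → ℂ := fun β t p =>
    c ^ (∑ i, β i) * (mexp β c (x + t • e) p.1 - mexp β c (x + t • e) p.2) * H p with hF
  have hmeas : ∀ (β : Fin n → ℕ) (t : ℝ), AEStronglyMeasurable (F β t) ρ :=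
    fun β t => Continuous.aestronglyMeasurable (by simp only [hF]; fun_prop)
  have hbd : ∀ (β : Fin n → ℕ) (t : ℝ) (p : En n × En n), ‖F β t p‖ ≤
      (2 * ‖c‖ ^ (∑ i, β i) * M) * (1 + ‖p‖) ^ ((∑ i, β i) + (k + 1)) :=
    fun β t p => norm_integrand_le hb hc β _ _ p
  have hF_int : Integrable (F β 0) ρ :=
    integrable_of_le hint (hmeas β 0) _ (by omega) (by positivity) (hbd β 0)
  have hbound : Integrable (fun p : En n × En n =>
      (2 * ‖c‖ ^ (∑ i, γ i) * M) * (1 + ‖p‖) ^ ((∑ i, γ i) + (k + 1))) ρ :=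
    integrable_of_le hint (Continuous.aestronglyMeasurable (by fun_prop))
      (2 * ‖c‖ ^ (∑ i, γ i) * M) (m := (∑ i, γ i) + (k + 1)) (by omega)
      (by positivity) (fun p => by rw [Real.norm_of_nonneg (by positivity)])
  have hderiv : ∀ (p : En n × En n) (t : ℝ),
      HasDerivAt (fun t => F β t p) (F γ t p) t := by
    intro p t
    refine ((((hasDerivAt_mexp β c x p.1 i t).sub (hasDerivAt_mexp β c x p.2 i t)).const_mul
      (c ^ (∑ i, β i))).mul_const (H p)).congr_deriv ?_
    simp only [hF, hγs, pow_succ, ← hγ, ← he]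
    ring
  have key := hasDerivAt_integral_of_dominated_loc_of_deriv_le (μ := ρ) (s := Set.univ)
    (x₀ := (0 : ℝ)) (F := F β) (F' := F γ) Filter.univ_mem
    (Eventually.of_forall fun t => hmeas β t) hF_int (hmeas γ 0)
    (ae_of_all _ fun p t _ => hbd γ t p) hbound (ae_of_all _ fun p t _ => hderiv p t)
  have hpd : pdC i (wint ρ H c β) x = ∫ p, F γ 0 p ∂ρ := key.2.deriv
  rw [hpd, wint]
  simp only [hF, zero_smul, add_zero]

lemma iterate_pdC_of_step {Q : (Fin n → ℕ) → En n → ℂ} {N : ℕ}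
    (hQ : ∀ β i, (∑ j, β j) + 1 ≤ N → pdC i (Q β) = Q (β + Pi.single i 1))
    (i : Fin n) (m : ℕ) (β : Fin n → ℕ) (hm : (∑ j, β j) + m ≤ N) :
    (pdC i)^[m] (Q β) = Q (β + Pi.single i m) := by
  induction m with
  | zero => simp
  | succ m ih =>
    rw [Function.iterate_succ_apply', ih (by omega), hQ _ _ (by rw [sum_add_single]; omega),
      add_assoc, ← Pi.single_add]

/-- If each `pdC i` raises the index of the family `Q` by the `i`-th unit vector, as long as the
order stays at most `N`, then `pdmC α` takes `Q 0` to `Q α`. -/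
lemma pdmC_of_step {Q : (Fin n → ℕ) → En n → ℂ} {N : ℕ}
    (hQ : ∀ β i, (∑ j, β j) + 1 ≤ N → pdC i (Q β) = Q (β + Pi.single i 1))
    (α : Fin n → ℕ) (hα : (∑ j, α j) ≤ N) : pdmC α (Q 0) = Q α := by
  have hlist : ∀ l : List (Fin n), (l.map α).sum ≤ N →
      ((l.map (fun i => (pdC i)^[α i])).foldr (· ∘ ·) id) (Q 0) =
        Q ((l.map (fun i => Pi.single i (α i))).sum) ∧
      ∑ j, ((l.map (fun i => (Pi.single i (α i) : Fin n → ℕ))).sum) j = (l.map α).sum := by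
    intro l
    induction l with
    | nil => intro _; simp
    | cons i l ih =>
      intro hl
      simp only [List.map_cons, List.sum_cons, List.foldr_cons, Function.comp_apply] at hl ⊢
      obtain ⟨h1, h2⟩ := ih (by omega)
      rw [h1, add_comm (Pi.single i (α i) : Fin n → ℕ), sum_add_single, h2]
      exact ⟨iterate_pdC_of_step hQ i (α i) _ (by omega), add_comm _ _⟩
  have h := (hlist (List.finRange n) (by
    rw [← List.ofFn_eq_map, List.sum_ofFn]; exact hα)).1
  rw [← List.ofFn_eq_map, ← List.ofFn_eq_map, List.sum_ofFn, Finset.univ_sum_single] at h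
  exact h

lemma pdmC_wint (hint : Integrable (fun p : En n × En n => (1 + ‖p‖) ^ (2 * (k + 1))) ρ)
    (hH : Continuous H) (hM : 0 ≤ M) (hb : ∀ p, ‖H p‖ ≤ M * (1 + ‖p‖) ^ (k + 1)) (hc : c.re = 0)
    (α : Fin n → ℕ) (hα : (∑ j, α j) ≤ k + 1) :
    pdmC α (wint ρ H c 0) = wint ρ H c α :=
  pdmC_of_step (fun β i => pdC_wint hint hH hM hb hc β i) α hα

/-- A single exponential integral is a Fourier transform on `En n × En n` along the bilinear form
`(p, x) ↦ a x·T p`, where `c = -2πi a`. -/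
lemma contDiff_integral_expc
    (hint : Integrable (fun p : En n × En n => (1 + ‖p‖) ^ (2 * (k + 1))) ρ)
    (hH : Continuous H) (hM : 0 ≤ M) (hb : ∀ p, ‖H p‖ ≤ M * (1 + ‖p‖) ^ (k + 1))
    (T : En n × En n →L[ℝ] En n) (a : ℝ) (hca : c = -(2 * Real.pi * Complex.I * a)) :
    ContDiff ℝ (k + 1) (fun x => ∫ p, expc c x (T p) * H p ∂ρ) := by
  have h := VectorFourier.contDiff_fourierIntegral (μ := ρ) (f := H) (N := ((k + 1 : ℕ) : ℕ∞))
    (a • ((innerSL ℝ : En n →L[ℝ] En n →L[ℝ] ℝ).comp T)) (fun m hm => by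
      have hm' : m ≤ k + 1 := by exact_mod_cast hm
      refine integrable_of_le hint (Continuous.aestronglyMeasurable (by fun_prop)) M
        (m := m + (k + 1)) (by omega) hM fun p => ?_
      rw [Real.norm_of_nonneg (by positivity), pow_add]
      calc ‖p‖ ^ m * ‖H p‖ ≤ (1 + ‖p‖) ^ m * (M * (1 + ‖p‖) ^ (k + 1)) := by
            gcongr
            · linarith
            · exact hb p
        _ = _ := by ring)
  have h' : ContDiff ℝ (k + 1) (VectorFourier.fourierIntegral Real.fourierChar ρ
      (a • ((innerSL ℝ : En n →L[ℝ] En n →L[ℝ] ℝ).comp T)).toLinearMap₁₂ H) := by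
    exact_mod_cast h
  convert h' using 1
  funext x
  rw [VectorFourier.fourierIntegral]
  refine integral_congr_ae (ae_of_all _ fun p => ?_)
  simp only [Circle.smul_def, Real.fourierChar_apply, smul_eq_mul, expc, hca]
  congr 2
  simp [PiLp.inner_apply]
  ring

lemma contDiff_wint (hint : Integrable (fun p : En n × En n => (1 + ‖p‖) ^ (2 * (k + 1))) ρ)
    (hH : Continuous H) (hM : 0 ≤ M) (hb : ∀ p, ‖H p‖ ≤ M * (1 + ‖p‖) ^ (k + 1))
    (a : ℝ) (hca : c = -(2 * Real.pi * Complex.I * a)) :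
    ContDiff ℝ (k + 1) (wint ρ H c 0) := by
  have hc : c.re = 0 := by simp [hca]
  have hi : ∀ (T : En n × En n →L[ℝ] En n) (x : En n),
      Integrable (fun p => expc c x (T p) * H p) ρ := fun T x =>
    integrable_of_le hint (Continuous.aestronglyMeasurable (by fun_prop)) M
      (m := k + 1) (by omega) hM fun p => by
        rw [norm_mul, norm_expc hc, one_mul]
        exact hb p
  have h := (contDiff_integral_expc hint hH hM hb (ContinuousLinearMap.fst ℝ _ _) a hca).sub
    (contDiff_integral_expc hint hH hM hb (ContinuousLinearMap.snd ℝ _ _) a hca)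
  convert h using 1
  funext x
  rw [← integral_sub (hi _ x) (hi _ x), wint]
  refine integral_congr_ae (ae_of_all _ fun p => ?_)
  simp [mexp, sub_mul]

end Weighted

/-! ### The kernel `C` -/

/-- The bound required of a weight, for the weights arising from the kernel. -/
lemma norm_weight_le {n k : ℕ} {c : ℂ} (hc : c.re = 0) (d : ℂ) (β : Fin n → ℕ)
    (hβ : (∑ j, β j) ≤ k + 1) (x : En n) (p : En n × En n) :
    ‖d * (mexp β c x p.1 - mexp β c x p.2)‖ ≤ (2 * ‖d‖) * (1 + ‖p‖) ^ (k + 1) := by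
  have h1 : (1 : ℝ) ≤ 1 + ‖p‖ := by linarith [norm_nonneg p]
  rw [norm_mul]
  calc _ ≤ ‖d‖ * (2 * (1 + ‖p‖) ^ (∑ i, β i)) := by
        gcongr
        exact norm_mexp_sub_le β hc x p
    _ ≤ ‖d‖ * (2 * (1 + ‖p‖) ^ (k + 1)) := by gcongr
    _ = _ := by ring

lemma conj_mexp {n : ℕ} (β : Fin n → ℕ) {c : ℂ} (hc : c.re = 0) (x s : En n) :
    mexp β (-c) x s = (starRingEnd ℂ) (mexp β c x s) := by
  have : (starRingEnd ℂ) c = -c := by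
    apply Complex.ext <;> simp [hc]
  rw [mexp, mexp, expc, expc, map_mul, ← Complex.exp_conj, map_mul, Complex.conj_ofReal,
    Complex.conj_ofReal, this]

theorem stmt5 (n k : ℕ) (hn : 1 ≤ n) (ρ : Measure (En n × En n)) [IsFiniteMeasure ρ]
    (hmom : Integrable (fun p : En n × En n => (‖p.1‖ ^ 2 + ‖p.2‖ ^ 2) ^ (k + 1)) ρ)
    (C : En n → En n → ℂ)
    (hC : ∀ x y : En n, C x y =
      ∫ p : En n × En n,
        (Complex.exp (2 * (Real.pi : ℂ) * Complex.I * ((∑ i, x i * p.1 i : ℝ) : ℂ)) -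
         Complex.exp (2 * (Real.pi : ℂ) * Complex.I * ((∑ i, x i * p.2 i : ℝ) : ℂ))) *
        (Complex.exp (-(2 * (Real.pi : ℂ) * Complex.I * ((∑ i, y i * p.1 i : ℝ) : ℂ))) -
         Complex.exp (-(2 * (Real.pi : ℂ) * Complex.I * ((∑ i, y i * p.2 i : ℝ) : ℂ)))) ∂ρ) :
    (∀ y : En n, ContDiff ℝ (k + 1) (fun x => C x y)) ∧
    (∀ x : En n, ContDiff ℝ (k + 1) (fun y => C x y)) ∧
    (∀ α : Fin n → ℕ, (∑ i, α i) ≤ k + 1 → ∀ x : En n,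
      mddC α C x = ((2 * Real.pi : ℝ) ^ (2 * ∑ i, α i) : ℝ) *
        ((∫ p : En n × En n,
          ‖((∏ i, p.1 i ^ α i : ℝ) : ℂ) *
              Complex.exp (2 * (Real.pi : ℂ) * Complex.I * ((∑ i, x i * p.1 i : ℝ) : ℂ)) -
            ((∏ i, p.2 i ^ α i : ℝ) : ℂ) *
              Complex.exp (2 * (Real.pi : ℂ) * Complex.I * ((∑ i, x i * p.2 i : ℝ) : ℂ))‖ ^ 2
          ∂ρ : ℝ) : ℂ)) := by
  have hint := integrable_one_add_norm_pow hmom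
  set c : ℂ := 2 * (Real.pi : ℂ) * Complex.I with hcdef
  have hc : c.re = 0 := by simp [hcdef]
  have hc' : (-c).re = 0 := by simp [hc]
  have h0 : (∑ j, (0 : Fin n → ℕ) j) ≤ k + 1 := by simp
  have hcont : ∀ (d c : ℂ) (β : Fin n → ℕ) (x : En n),
      Continuous (fun p : En n × En n => d * (mexp β c x p.1 - mexp β c x p.2)) := by
    intro d c β x
    fun_prop
  have hCx : ∀ y, (fun x => C x y) =
      wint ρ (fun p => 1 * (mexp 0 (-c) y p.1 - mexp 0 (-c) y p.2)) c 0 := by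
    intro y
    funext x
    rw [hC, wint]
    refine integral_congr_ae (ae_of_all _ fun p => ?_)
    simp [mexp, expc]
  have hCy : ∀ x, C x =
      wint ρ (fun p => 1 * (mexp 0 c x p.1 - mexp 0 c x p.2)) (-c) 0 := by
    intro x
    funext y
    rw [hC, wint]
    refine integral_congr_ae (ae_of_all _ fun p => ?_)
    simp only [mexp, expc, neg_mul]
    simp [mul_comm]
  refine ⟨fun y => ?_, fun x => ?_, fun α hα x => ?_⟩
  · rw [hCx]
    exact contDiff_wint hint (hcont _ _ _ _) (by positivity) (norm_weight_le hc' _ _ h0 _)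
      (-1) (by simp [hcdef])
  · change ContDiff ℝ (k + 1) (C x)
    rw [hCy]
    exact contDiff_wint hint (hcont _ _ _ _) (by positivity) (norm_weight_le hc _ _ h0 _)
      1 (by simp [hcdef])
  ·
    -- The factor differentiated in `y`, frozen at `y = x`, is the weight for the `x`-derivatives.
    have hinner : (fun u => pdmC α (C u) x) =
        wint ρ (fun p => (-c) ^ (∑ i, α i) * (mexp α (-c) x p.1 - mexp α (-c) x p.2)) c 0 := by
      funext u
      rw [hCy, pdmC_wint hint (hcont _ _ _ _) (by positivity) (norm_weight_le hc _ _ h0 _)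
        hc' α hα, wint, wint]
      refine integral_congr_ae (ae_of_all _ fun p => ?_)
      simp only [Pi.zero_apply, Finset.sum_const_zero, pow_zero]
      ring
    rw [mddC, hinner, pdmC_wint hint (hcont _ _ _ _) (by positivity) (norm_weight_le hc' _ _ hα _)
      hc α hα, wint, ← integral_complex_ofReal, ← integral_const_mul]
    refine integral_congr_ae (ae_of_all _ fun p => ?_)
    have hcc : c * (-c) = ((2 * Real.pi : ℝ) ^ 2 : ℝ) := by
      rw [hcdef]
      push_cast
      linear_combination (-4 * (Real.pi : ℂ) ^ 2) * Complex.I_sq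
    change c ^ (∑ i, α i) * (mexp α c x p.1 - mexp α c x p.2) *
      ((-c) ^ (∑ i, α i) * (mexp α (-c) x p.1 - mexp α (-c) x p.2)) =
      _ * ((‖mexp α c x p.1 - mexp α c x p.2‖ ^ 2 : ℝ) : ℂ)
    clear_value c
    rw [conj_mexp α hc, conj_mexp α hc, ← map_sub, pow_mul, Complex.ofReal_pow (_ ^ 2), ← hcc,
      mul_pow, Complex.ofReal_pow, ← Complex.mul_conj']
    ring

end
end

section
/- Let n ≥ 1, k ≥ 0 be integers. There is a constant C, depending only on n and k, such that for every finite Borel measure ρ on ℝⁿ × ℝⁿ with ∫ (|s|² + |t|²)^{k+1}(1+|s|²+|t|²) dρ(s,t) < ∞, every x ∈ ℝⁿ, and every multi-index α with |α| ≤ k+1, ∫_{ℝⁿ×ℝⁿ} | s^α e^{2πi x·s} − t^α e^{2πi x·t} |² dρ(s,t) ≤ C (|x|² + 1) ∫_{ℝⁿ×ℝⁿ} (|s|² + |t|² + 1)^{k+1} |s − t|² dρ(s,t). -/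
open MeasureTheory ProbabilityTheory Real Filter

noncomputable section

theorem abs_prod_pow_le {ι : Type*} (S : Finset ι) (a : ι → ℝ) (α : ι → ℕ) (R : ℝ)
    (ha : ∀ i, |a i| ≤ R) : |∏ i ∈ S, a i ^ α i| ≤ R ^ (∑ i ∈ S, α i) := by
  rw [Finset.abs_prod, ← Finset.prod_pow_eq_pow_sum]
  refine Finset.prod_le_prod (fun i _ => abs_nonneg _) fun i _ => ?_
  rw [abs_pow]
  exact pow_le_pow_left₀ (abs_nonneg _) (ha i) _

theorem abs_pow_sub_le {a b R d : ℝ} (hR : 1 ≤ R) (ha : |a| ≤ R) (hb : |b| ≤ R)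
    (hd : |a - b| ≤ d) (m : ℕ) : |a ^ m - b ^ m| ≤ m * R ^ m * d := by
  have hd0 : 0 ≤ d := (abs_nonneg _).trans hd
  calc |a ^ m - b ^ m| ≤ |a - b| * m * max |a| |b| ^ (m - 1) := abs_pow_sub_pow_le a b m
    _ ≤ d * m * R ^ m := by
        have h1 : max |a| |b| ^ (m - 1) ≤ R ^ m :=
          (pow_le_pow_left₀ (le_max_of_le_left (abs_nonneg _)) (max_le ha hb) _).trans
            (pow_le_pow_right₀ hR (Nat.sub_le _ _))
        gcongr
    _ = m * R ^ m * d := by ring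

/-- Monomials are Lipschitz on the cube `[-R, R]^S`, by telescoping over the coordinates. The
exponent of `R` is one more than optimal, which avoids a case distinction for degree zero. -/
theorem abs_prod_pow_sub_le {ι : Type*} (S : Finset ι) (a b : ι → ℝ) (α : ι → ℕ) {R d : ℝ}
    (hR : 1 ≤ R) (ha : ∀ i, |a i| ≤ R) (hb : ∀ i, |b i| ≤ R) (hd : ∀ i, |a i - b i| ≤ d) :
    |∏ i ∈ S, a i ^ α i - ∏ i ∈ S, b i ^ α i|
      ≤ ((∑ i ∈ S, α i : ℕ) : ℝ) * R ^ (∑ i ∈ S, α i) * d := by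
  classical
  induction S using Finset.induction_on with
  | empty => simp
  | insert j S hj ih =>
    rw [Finset.prod_insert hj, Finset.prod_insert hj, Finset.sum_insert hj]
    have h1 := abs_pow_sub_le hR (ha j) (hb j) (hd j) (α j)
    have h2 := abs_prod_pow_le S a α R ha
    have h3 : |b j ^ α j| ≤ R ^ α j := by
      rw [abs_pow]; exact pow_le_pow_left₀ (abs_nonneg _) (hb j) _
    have h0 : 0 ≤ (α j : ℝ) * R ^ α j * d := (abs_nonneg _).trans h1
    set A := ∏ i ∈ S, a i ^ α i
    set B := ∏ i ∈ S, b i ^ α i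
    calc |a j ^ α j * A - b j ^ α j * B|
        = |(a j ^ α j - b j ^ α j) * A + b j ^ α j * (A - B)| := by ring_nf
      _ ≤ |a j ^ α j - b j ^ α j| * |A| + |b j ^ α j| * |A - B| := by
          rw [← abs_mul, ← abs_mul]; exact abs_add_le _ _
      _ ≤ (α j * R ^ α j * d) * R ^ (∑ i ∈ S, α i)
          + R ^ α j * (((∑ i ∈ S, α i : ℕ) : ℝ) * R ^ (∑ i ∈ S, α i) * d) := by gcongr
      _ = _ := by push_cast; ring

theorem norm_exp_sub_exp_le {n : ℕ} (x s t : En n) :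
    ‖Complex.exp (2 * (Real.pi : ℂ) * Complex.I * ((∑ i, x i * s i : ℝ) : ℂ)) -
      Complex.exp (2 * (Real.pi : ℂ) * Complex.I * ((∑ i, x i * t i : ℝ) : ℂ))‖
      ≤ 2 * Real.pi * (‖x‖ * ‖s - t‖) := by
  set a : ℝ := ∑ i, x i * s i with ha
  set b : ℝ := ∑ i, x i * t i with hb
  have hab : |a - b| ≤ ‖x‖ * ‖s - t‖ := by
    have : a - b = inner ℝ x (s - t) := by
      simp [ha, hb, PiLp.inner_apply, ← Finset.sum_sub_distrib]
      refine Finset.sum_congr rfl fun i _ => by ring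
    rw [this]
    exact abs_real_inner_le_norm _ _
  have e : Complex.exp (2 * (Real.pi : ℂ) * Complex.I * (a : ℂ)) -
      Complex.exp (2 * (Real.pi : ℂ) * Complex.I * (b : ℂ)) =
      Complex.exp (((2 * Real.pi * b : ℝ) : ℂ) * Complex.I) *
        (Complex.exp (Complex.I * ((2 * Real.pi * (a - b) : ℝ) : ℂ)) - 1) := by
    rw [mul_sub, ← Complex.exp_add, mul_one]
    push_cast
    congr 2 <;> ring
  rw [e, norm_mul, Complex.norm_exp_ofReal_mul_I, one_mul]
  refine (Real.norm_exp_I_mul_ofReal_sub_one_le).trans ?_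
  rw [Real.norm_eq_abs, abs_mul, abs_of_pos Real.two_pi_pos]
  gcongr

theorem pointwise_bound {n : ℕ} (k : ℕ) (x s t : En n) (α : Fin n → ℕ)
    (hα : (∑ i, α i) ≤ k + 1) :
    ‖((∏ i, s i ^ α i : ℝ) : ℂ) *
        Complex.exp (2 * (Real.pi : ℂ) * Complex.I * ((∑ i, x i * s i : ℝ) : ℂ)) -
      ((∏ i, t i ^ α i : ℝ) : ℂ) *
        Complex.exp (2 * (Real.pi : ℂ) * Complex.I * ((∑ i, x i * t i : ℝ) : ℂ))‖ ^ 2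
      ≤ (2 * (((k : ℝ) + 1) ^ 2 + 4 * Real.pi ^ 2)) * (‖x‖ ^ 2 + 1) *
        ((‖s‖ ^ 2 + ‖t‖ ^ 2 + 1) ^ (k + 1) * ‖s - t‖ ^ 2) := by
  set R := √(‖s‖ ^ 2 + ‖t‖ ^ 2 + 1) with hRdef
  have hR2 : R ^ 2 = ‖s‖ ^ 2 + ‖t‖ ^ 2 + 1 := Real.sq_sqrt (by positivity)
  have hR : 1 ≤ R := Real.one_le_sqrt.2 (by nlinarith [sq_nonneg ‖s‖, sq_nonneg ‖t‖])
  have hs : ∀ i, |s i| ≤ R := fun i => (PiLp.norm_apply_le s i).trans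
    (Real.le_sqrt_of_sq_le (by nlinarith [sq_nonneg ‖t‖]))
  have ht : ∀ i, |t i| ≤ R := fun i => (PiLp.norm_apply_le t i).trans
    (Real.le_sqrt_of_sq_le (by nlinarith [sq_nonneg ‖s‖]))
  have hd : ∀ i, |s i - t i| ≤ ‖s - t‖ := fun i => PiLp.norm_apply_le (s - t) i
  have hpow : R ^ (∑ i, α i) ≤ R ^ (k + 1) := pow_le_pow_right₀ hR hα
  have hαR : ((∑ i, α i : ℕ) : ℝ) ≤ (k : ℝ) + 1 := by exact_mod_cast hα
  have h1 : |∏ i, s i ^ α i - ∏ i, t i ^ α i| ≤ ((k : ℝ) + 1) * R ^ (k + 1) * ‖s - t‖ :=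
    (abs_prod_pow_sub_le Finset.univ s t α hR hs ht hd).trans (by gcongr)
  have h2 : |∏ i, t i ^ α i| ≤ R ^ (k + 1) := (abs_prod_pow_le Finset.univ t α R ht).trans hpow
  have h3 := norm_exp_sub_exp_le x s t
  have h4 : ‖Complex.exp (2 * (Real.pi : ℂ) * Complex.I * ((∑ i, x i * s i : ℝ) : ℂ))‖ = 1 := by
    have := Complex.norm_exp_ofReal_mul_I (2 * Real.pi * ∑ i, x i * s i)
    rw [← this]
    congr 2
    push_cast
    ring
  set P := ∏ i, s i ^ α i
  set Q := ∏ i, t i ^ α i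
  set E := Complex.exp (2 * (Real.pi : ℂ) * Complex.I * ((∑ i, x i * s i : ℝ) : ℂ))
  set F := Complex.exp (2 * (Real.pi : ℂ) * Complex.I * ((∑ i, x i * t i : ℝ) : ℂ))
  have h5 : ‖(P : ℂ) * E - (Q : ℂ) * F‖
      ≤ R ^ (k + 1) * ‖s - t‖ * (((k : ℝ) + 1) + 2 * Real.pi * ‖x‖) := by
    calc ‖(P : ℂ) * E - (Q : ℂ) * F‖
        = ‖((P - Q : ℝ) : ℂ) * E + (Q : ℂ) * (E - F)‖ := by push_cast; ring_nf
      _ ≤ |P - Q| * 1 + |Q| * ‖E - F‖ := by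
          refine (norm_add_le _ _).trans_eq ?_
          rw [norm_mul, norm_mul, h4, Complex.norm_real, Complex.norm_real, Real.norm_eq_abs,
            Real.norm_eq_abs]
      _ ≤ (((k : ℝ) + 1) * R ^ (k + 1) * ‖s - t‖) * 1
          + R ^ (k + 1) * (2 * Real.pi * (‖x‖ * ‖s - t‖)) := by gcongr
      _ = _ := by ring
  have h6 : (((k : ℝ) + 1) + 2 * Real.pi * ‖x‖) ^ 2
      ≤ (2 * (((k : ℝ) + 1) ^ 2 + 4 * Real.pi ^ 2)) * (‖x‖ ^ 2 + 1) := by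
    nlinarith [sq_nonneg (((k : ℝ) + 1) - 2 * Real.pi * ‖x‖), sq_nonneg (((k : ℝ) + 1) * ‖x‖),
      sq_nonneg Real.pi]
  calc _ ≤ (R ^ (k + 1) * ‖s - t‖ * (((k : ℝ) + 1) + 2 * Real.pi * ‖x‖)) ^ 2 := by gcongr
    _ = (((k : ℝ) + 1) + 2 * Real.pi * ‖x‖) ^ 2 * ((R ^ 2) ^ (k + 1) * ‖s - t‖ ^ 2) := by ring
    _ ≤ _ := by rw [hR2]; gcongr

theorem integrable_weight {n : ℕ} (k : ℕ) (ρ : Measure (En n × En n)) [IsFiniteMeasure ρ]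
    (h : Integrable (fun p : En n × En n =>
        (‖p.1‖ ^ 2 + ‖p.2‖ ^ 2) ^ (k + 1) * (1 + ‖p.1‖ ^ 2 + ‖p.2‖ ^ 2)) ρ) :
    Integrable (fun p : En n × En n =>
        (‖p.1‖ ^ 2 + ‖p.2‖ ^ 2 + 1) ^ (k + 1) * ‖p.1 - p.2‖ ^ 2) ρ := by
  refine Integrable.mono' (((h.const_mul 2).add (integrable_const 1)).const_mul (2 * 2 ^ k))
    (by fun_prop) (Eventually.of_forall fun p => ?_)
  rw [Real.norm_of_nonneg (by positivity)]
  simp only [Pi.add_apply]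
  have hd : ‖p.1 - p.2‖ ^ 2 ≤ 2 * (‖p.1‖ ^ 2 + ‖p.2‖ ^ 2) := by
    have := norm_sub_le p.1 p.2
    nlinarith [sq_nonneg (‖p.1‖ - ‖p.2‖), norm_nonneg (p.1 - p.2)]
  rw [show 1 + ‖p.1‖ ^ 2 + ‖p.2‖ ^ 2 = 1 + (‖p.1‖ ^ 2 + ‖p.2‖ ^ 2) by ring]
  have hu : 0 ≤ ‖p.1‖ ^ 2 + ‖p.2‖ ^ 2 := by positivity
  set u := ‖p.1‖ ^ 2 + ‖p.2‖ ^ 2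
  have h1 : (u + 1) ^ (k + 1) ≤ 2 ^ k * (u ^ (k + 1) + 1) := by
    simpa using add_pow_le hu zero_le_one (k + 1)
  have h2 : u ≤ 1 + u ^ (k + 1) * u := by
    rcases le_total u 1 with h | h
    · have : 0 ≤ u ^ (k + 1) * u := by positivity
      linarith
    · have : 1 ≤ u ^ (k + 1) := one_le_pow₀ h
      nlinarith
  have h3 : 0 ≤ u ^ (k + 1) := by positivity
  calc (u + 1) ^ (k + 1) * ‖p.1 - p.2‖ ^ 2 ≤ (2 ^ k * (u ^ (k + 1) + 1)) * (2 * u) := by gcongr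
    _ = 2 * 2 ^ k * (u ^ (k + 1) * u + u) := by ring
    _ ≤ 2 * 2 ^ k * (2 * (u ^ (k + 1) * (1 + u)) + 1) := by
        refine mul_le_mul_of_nonneg_left ?_ (by positivity)
        nlinarith

theorem stmt6 (n k : ℕ) (hn : 1 ≤ n) :
    ∃ C : ℝ, ∀ (ρ : Measure (En n × En n)), IsFiniteMeasure ρ →
      Integrable (fun p : En n × En n =>
        (‖p.1‖ ^ 2 + ‖p.2‖ ^ 2) ^ (k + 1) * (1 + ‖p.1‖ ^ 2 + ‖p.2‖ ^ 2)) ρ →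
      ∀ x : En n, ∀ α : Fin n → ℕ, (∑ i, α i) ≤ k + 1 →
        (∫ p : En n × En n,
            ‖((∏ i, p.1 i ^ α i : ℝ) : ℂ) *
                Complex.exp (2 * (Real.pi : ℂ) * Complex.I *
                  ((∑ i, x i * p.1 i : ℝ) : ℂ)) -
              ((∏ i, p.2 i ^ α i : ℝ) : ℂ) *
                Complex.exp (2 * (Real.pi : ℂ) * Complex.I *
                  ((∑ i, x i * p.2 i : ℝ) : ℂ))‖ ^ 2 ∂ρ)
          ≤ C * (‖x‖ ^ 2 + 1) *
            ∫ p : En n × En n,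
              (‖p.1‖ ^ 2 + ‖p.2‖ ^ 2 + 1) ^ (k + 1) * ‖p.1 - p.2‖ ^ 2 ∂ρ := by
  refine ⟨2 * (((k : ℝ) + 1) ^ 2 + 4 * Real.pi ^ 2), fun ρ _ h x α hα => ?_⟩
  rw [← integral_const_mul]
  exact integral_mono_of_nonneg (Eventually.of_forall fun p => sq_nonneg _)
    ((integrable_weight k ρ h).const_mul _)
    (Eventually.of_forall fun p => pointwise_bound k x p.1 p.2 α hα)

end
end

section
/- There is an absolute constant C > 0 (one may take C = 4) with the following property. Let n ≥ 2, let ρ₁ and ρ₂ be Borel probability measures supported on the unit sphere S^{n−1} ⊂ ℝⁿ, and let Ω₁, …, Ω_N be a finite measurable partition of S^{n−1} such that each Ω_j has diameter at most r (in the Euclidean metric of ℝⁿ). Then W₂²(ρ₁, ρ₂) ≤ C ( r² + Σ_{j=1}^N |ρ₁(Ω_j) − ρ₂(Ω_j)| ). -/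
/-!
The bound comes from an explicit transport plan. Write `mⱼ = min (ρ₁ Ωⱼ) (ρ₂ Ωⱼ)`. Inside each
cell `Ωⱼ`, mass `mⱼ` of the normalised restriction of `ρ₁` is coupled with mass `mⱼ` of the
normalised restriction of `ρ₂`; this mass moves by at most `r`, so all cells together cost at most
`r²`. What remains of `ρ₁` and of `ρ₂` has the same total mass `∑ⱼ (ρ₁ Ωⱼ - mⱼ)`, which is at most
`∑ⱼ |ρ₁ Ωⱼ - ρ₂ Ωⱼ|`, and moves by at most the diameter `2` of the sphere.

Both kinds of pieces are coupled by a normalised product measure (`exists_coupling`). The cost of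
any coupling of measures carried by a bounded set is controlled by `lintegral_dist_sq_le`, and the
decomposition of a measure into its normalised restrictions is `sum_smul_cond`.
-/

open MeasureTheory ProbabilityTheory Real Filter

noncomputable section

/-- Squared Wasserstein-2 distance: infimum of the quadratic transport cost over
all couplings. -/
def W2sq {n : ℕ} (μ ν : Measure (En n)) : ℝ :=
  sInf {c : ℝ | ∃ ρ : Measure (En n × En n),
    ρ.map Prod.fst = μ ∧ ρ.map Prod.snd = ν ∧
    c = ∫ p : En n × En n, dist p.1 p.2 ^ 2 ∂ρ}

/-- Finite measures of equal mass have a coupling. The witness is the product measure divided by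
the common mass; when that mass is zero, both measures vanish. -/
lemma exists_coupling {X : Type*} [MeasurableSpace X] (α β : Measure X)
    [IsFiniteMeasure α] [IsFiniteMeasure β] (h : α Set.univ = β Set.univ) :
    ∃ γ : Measure (X × X), γ.map Prod.fst = α ∧ γ.map Prod.snd = β := by
  by_cases h0 : α Set.univ = 0
  · refine ⟨0, ?_, ?_⟩
    · rw [Measure.map_zero, Measure.measure_univ_eq_zero.1 h0]
    · rw [Measure.map_zero, Measure.measure_univ_eq_zero.1 (h.symm.trans h0)]
  · refine ⟨(α Set.univ)⁻¹ • α.prod β, ?_, ?_⟩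
    · rw [Measure.map_smul, Measure.map_fst_prod, smul_smul, ← h,
        ENNReal.inv_mul_cancel h0 (measure_ne_top _ _), one_smul]
    · rw [Measure.map_smul, Measure.map_snd_prod, smul_smul,
        ENNReal.inv_mul_cancel h0 (measure_ne_top _ _), one_smul]

/-- A coupling of measures carried by a set whose points are within distance `d` of each other
costs at most `d²` times its mass. -/
lemma lintegral_dist_sq_le {n : ℕ} (γ : Measure (En n × En n)) {α β : Measure (En n)}
    (h₁ : γ.map Prod.fst = α) (h₂ : γ.map Prod.snd = β) {s : Set (En n)}
    (hα : α sᶜ = 0) (hβ : β sᶜ = 0) {d : ℝ}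
    (hd : ∀ x ∈ s, ∀ y ∈ s, dist x y ≤ d) :
    ∫⁻ p, ENNReal.ofReal (dist p.1 p.2 ^ 2) ∂γ ≤ ENNReal.ofReal (d ^ 2) * α Set.univ := by
  have e₁ : ∀ᵐ p ∂γ, p.1 ∈ s :=
    ae_of_ae_map measurable_fst.aemeasurable (p := (· ∈ s)) (by rw [h₁]; exact hα)
  have e₂ : ∀ᵐ p ∂γ, p.2 ∈ s :=
    ae_of_ae_map measurable_snd.aemeasurable (p := (· ∈ s)) (by rw [h₂]; exact hβ)
  calc ∫⁻ p, ENNReal.ofReal (dist p.1 p.2 ^ 2) ∂γ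
      ≤ ∫⁻ _, ENNReal.ofReal (d ^ 2) ∂γ := by
        refine lintegral_mono_ae ?_
        filter_upwards [e₁, e₂] with p hp₁ hp₂
        have := hd _ hp₁ _ hp₂
        gcongr
    _ = ENNReal.ofReal (d ^ 2) * α Set.univ := by
        rw [lintegral_const, ← h₁, Measure.map_apply measurable_fst MeasurableSet.univ,
          Set.preimage_univ]

/-- A measure carried by a finite partition is the sum of its normalised restrictions to the cells,
weighted by the masses of the cells. -/
lemma sum_smul_cond {X : Type*} [MeasurableSpace X] (μ : Measure X) [IsFiniteMeasure μ] {N : ℕ}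
    {Om : Fin N → Set X} (hm : ∀ j, MeasurableSet (Om j))
    (hd : Pairwise (Function.onFun Disjoint Om)) (hμ : μ (⋃ j, Om j)ᶜ = 0) :
    ∑ j, μ (Om j) • ProbabilityTheory.cond μ (Om j) = μ := by
  have h : ∀ j, μ (Om j) • ProbabilityTheory.cond μ (Om j) = μ.restrict (Om j) := by
    intro j
    by_cases h0 : μ (Om j) = 0
    · rw [h0, zero_smul, Measure.restrict_eq_zero.2 h0]
    · rw [ProbabilityTheory.cond, smul_smul, ENNReal.mul_inv_cancel h0 (measure_ne_top _ _),
        one_smul]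
  simp_rw [h]
  rw [← Measure.sum_fintype, ← Measure.restrict_iUnion hd hm]
  exact Measure.restrict_eq_self_of_ae_mem hμ

lemma smul_cond_univ {X : Type*} [MeasurableSpace X] (μ : Measure X) [IsFiniteMeasure μ]
    (s : Set X) {c : ENNReal} (h : c ≤ μ s) :
    (c • ProbabilityTheory.cond μ s) Set.univ = c := by
  by_cases h0 : μ s = 0
  · have : c = 0 := le_antisymm (h0 ▸ h) zero_le
    simp [this]
  · have := ProbabilityTheory.cond_isProbabilityMeasure h0
    simp

lemma cond_compl_eq_zero {X : Type*} [MeasurableSpace X] (μ : Measure X) {s t : Set X}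
    (hs : MeasurableSet s) (h : s ⊆ t) : ProbabilityTheory.cond μ s tᶜ = 0 := by
  have : s ∩ tᶜ = ∅ := by
    rw [← Set.sdiff_eq, Set.sdiff_eq_empty]; exact h
  rw [ProbabilityTheory.cond_apply hs, this, measure_empty, mul_zero]

/-- The transport plan. Its cost is measured by a Lebesgue integral in `ℝ≥0∞`, so that no
integrability has to be checked; the second term of the bound is the mass left over after coupling
within cells, each unit of which costs at most `2² = 4`. -/
lemma exists_plan {n : ℕ} (ρ₁ ρ₂ : Measure (En n))
    [IsProbabilityMeasure ρ₁] [IsProbabilityMeasure ρ₂]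
    (hs₁ : ρ₁ (Metric.sphere (0 : En n) 1)ᶜ = 0)
    (hs₂ : ρ₂ (Metric.sphere (0 : En n) 1)ᶜ = 0)
    (N : ℕ) (Om : Fin N → Set (En n)) (r : ℝ)
    (hm : ∀ j, MeasurableSet (Om j)) (hd : Pairwise (Function.onFun Disjoint Om))
    (hU : (⋃ j, Om j) = Metric.sphere (0 : En n) 1)
    (hr : ∀ j, Metric.diam (Om j) ≤ r) :
    ∃ γ : Measure (En n × En n), γ.map Prod.fst = ρ₁ ∧ γ.map Prod.snd = ρ₂ ∧
      ∫⁻ p, ENNReal.ofReal (dist p.1 p.2 ^ 2) ∂γ ≤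
        ENNReal.ofReal (r ^ 2) + 4 * ∑ j, (ρ₁ (Om j) - min (ρ₁ (Om j)) (ρ₂ (Om j))) := by
  have hsub : ∀ j, Om j ⊆ Metric.sphere (0 : En n) 1 := fun j => hU ▸ Set.subset_iUnion Om j
  have hdr : ∀ j, ∀ x ∈ Om j, ∀ y ∈ Om j, dist x y ≤ r := fun j x hx y hy =>
    (Metric.dist_le_diam_of_mem (Metric.isBounded_sphere.subset (hsub j)) hx hy).trans (hr j)
  have hd2 : ∀ x ∈ Metric.sphere (0 : En n) 1, ∀ y ∈ Metric.sphere (0 : En n) 1,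
      dist x y ≤ 2 := by
    intro x hx y hy
    rw [Metric.mem_sphere] at hx hy
    linarith [dist_triangle_right x y 0]
  set m : Fin N → ENNReal := fun j => min (ρ₁ (Om j)) (ρ₂ (Om j))
  have hm₁ : ∀ j, m j ≤ ρ₁ (Om j) := fun j => min_le_left _ _
  have hm₂ : ∀ j, m j ≤ ρ₂ (Om j) := fun j => min_le_right _ _
  have hmt : ∀ j, m j ≠ ⊤ := fun j => ((hm₁ j).trans_lt (measure_lt_top _ _)).ne
  -- Splitting of either measure into the part coupled within cells and the remainder; it is
  -- applied to both `ρ₁` and `ρ₂`.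
  have key : ∀ (ρ : Measure (En n)) [IsProbabilityMeasure ρ],
      ρ (Metric.sphere (0 : En n) 1)ᶜ = 0 → (∀ j, m j ≤ ρ (Om j)) →
      (∑ j, m j • ProbabilityTheory.cond ρ (Om j)) +
        ∑ j, (ρ (Om j) - m j) • ProbabilityTheory.cond ρ (Om j) = ρ ∧
      (∑ j, (ρ (Om j) - m j) • ProbabilityTheory.cond ρ (Om j)) Set.univ =
        ∑ j, (ρ (Om j) - m j) ∧
      (∑ j, m j) + ∑ j, (ρ (Om j) - m j) = 1 ∧
      (∑ j, (ρ (Om j) - m j) • ProbabilityTheory.cond ρ (Om j))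
        (Metric.sphere (0 : En n) 1)ᶜ = 0 := by
    intro ρ _ hρ hmρ
    refine ⟨?_, ?_, ?_, ?_⟩
    · rw [← Finset.sum_add_distrib]
      conv_rhs => rw [← sum_smul_cond ρ hm hd (by rw [hU]; exact hρ)]
      refine Finset.sum_congr rfl fun j _ => ?_
      rw [← add_smul, add_tsub_cancel_of_le (hmρ j)]
    · rw [Measure.finsetSum_apply]
      exact Finset.sum_congr rfl fun j _ => smul_cond_univ ρ _ tsub_le_self
    · rw [← Finset.sum_add_distrib]
      have : ∀ j, m j + (ρ (Om j) - m j) = ρ (Om j) := fun j => add_tsub_cancel_of_le (hmρ j)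
      simp_rw [this]
      rw [← tsum_fintype (L := .unconditional _), ← measure_iUnion hd hm, hU]
      exact (prob_compl_eq_zero_iff Metric.isClosed_sphere.measurableSet).1 hρ
    · rw [Measure.finsetSum_apply]
      refine Finset.sum_eq_zero fun j _ => ?_
      rw [Measure.smul_apply, cond_compl_eq_zero ρ (hm j) (hsub j), smul_zero]
  obtain ⟨hA₁, hB₁, hC₁, hD₁⟩ := key ρ₁ hs₁ hm₁
  obtain ⟨hA₂, hB₂, hC₂, hD₂⟩ := key ρ₂ hs₂ hm₂
  -- Both remainders have mass `1 - ∑ⱼ mⱼ`.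
  have hmass : ∑ j, (ρ₁ (Om j) - m j) = ∑ j, (ρ₂ (Om j) - m j) :=
    (ENNReal.add_right_inj (ENNReal.sum_ne_top.2 fun j _ => hmt j)).1 (hC₁.trans hC₂.symm)
  have hcell : ∀ j, ∃ γ : Measure (En n × En n),
      γ.map Prod.fst = m j • ProbabilityTheory.cond ρ₁ (Om j) ∧
      γ.map Prod.snd = m j • ProbabilityTheory.cond ρ₂ (Om j) := by
    intro j
    have := Measure.smul_finite (ProbabilityTheory.cond ρ₁ (Om j)) (hmt j)
    have := Measure.smul_finite (ProbabilityTheory.cond ρ₂ (Om j)) (hmt j)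
    exact exists_coupling _ _
      ((smul_cond_univ ρ₁ _ (hm₁ j)).trans (smul_cond_univ ρ₂ _ (hm₂ j)).symm)
  choose γ hγ₁ hγ₂ using hcell
  have hfin₁ : IsFiniteMeasure (∑ j, (ρ₁ (Om j) - m j) • ProbabilityTheory.cond ρ₁ (Om j)) :=
    isFiniteMeasure_of_le ρ₁ (by conv_rhs => rw [← hA₁]
                                 exact Measure.le_add_left le_rfl)
  have hfin₂ : IsFiniteMeasure (∑ j, (ρ₂ (Om j) - m j) • ProbabilityTheory.cond ρ₂ (Om j)) :=
    isFiniteMeasure_of_le ρ₂ (by conv_rhs => rw [← hA₂]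
                                 exact Measure.le_add_left le_rfl)
  obtain ⟨τ, hτ₁, hτ₂⟩ := exists_coupling _ _ (hB₁.trans (hmass.trans hB₂.symm))
  refine ⟨(∑ j, γ j) + τ, ?_, ?_, ?_⟩
  · rw [Measure.map_add _ _ measurable_fst, hτ₁, ← Measure.mapₗ_apply_of_measurable measurable_fst,
      map_sum]
    simp_rw [Measure.mapₗ_apply_of_measurable measurable_fst, hγ₁]
    exact hA₁
  · rw [Measure.map_add _ _ measurable_snd, hτ₂, ← Measure.mapₗ_apply_of_measurable measurable_snd,
      map_sum]
    simp_rw [Measure.mapₗ_apply_of_measurable measurable_snd, hγ₂]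
    exact hA₂
  · rw [lintegral_add_measure, lintegral_finsetSum_measure]
    refine add_le_add ?_ ?_
    · calc ∑ j, ∫⁻ p, ENNReal.ofReal (dist p.1 p.2 ^ 2) ∂(γ j)
          ≤ ∑ j, ENNReal.ofReal (r ^ 2) * m j := by
            refine Finset.sum_le_sum fun j _ => ?_
            refine (lintegral_dist_sq_le (γ j) (hγ₁ j) (hγ₂ j) ?_ ?_ (hdr j)).trans_eq ?_
            · rw [Measure.smul_apply, cond_compl_eq_zero ρ₁ (hm j) subset_rfl, smul_zero]
            · rw [Measure.smul_apply, cond_compl_eq_zero ρ₂ (hm j) subset_rfl, smul_zero]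
            · rw [smul_cond_univ ρ₁ _ (hm₁ j)]
        _ = ENNReal.ofReal (r ^ 2) * ∑ j, m j := by rw [Finset.mul_sum]
        _ ≤ ENNReal.ofReal (r ^ 2) := mul_le_of_le_one_right' (hC₁ ▸ le_self_add)
    · refine (lintegral_dist_sq_le τ hτ₁ hτ₂ hD₁ hD₂ hd2).trans_eq ?_
      rw [hB₁]
      norm_num [m]

theorem stmt7 :
    ∃ C : ℝ, 0 < C ∧ ∀ (n : ℕ), 2 ≤ n → ∀ (ρ₁ ρ₂ : Measure (En n)),
      IsProbabilityMeasure ρ₁ → IsProbabilityMeasure ρ₂ →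
      -- both measures are supported on the unit sphere
      ρ₁ (Metric.sphere (0 : En n) 1)ᶜ = 0 →
      ρ₂ (Metric.sphere (0 : En n) 1)ᶜ = 0 →
      ∀ (N : ℕ) (Om : Fin N → Set (En n)) (r : ℝ),
        -- `Om` is a finite measurable partition of the sphere
        (∀ j, MeasurableSet (Om j)) →
        Pairwise (Function.onFun Disjoint Om) →
        (⋃ j, Om j) = Metric.sphere (0 : En n) 1 →
        -- each piece has diameter at most `r`
        (∀ j, Metric.diam (Om j) ≤ r) →
        W2sq ρ₁ ρ₂ ≤ C * (r ^ 2 + ∑ j, |(ρ₁ (Om j)).toReal - (ρ₂ (Om j)).toReal|) := by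
  refine ⟨4, by norm_num, ?_⟩
  intro n _ ρ₁ ρ₂ _ _ hs₁ hs₂ N Om r hm hd hU hr
  obtain ⟨γ, h₁, h₂, hc⟩ := exists_plan ρ₁ ρ₂ hs₁ hs₂ N Om r hm hd hU hr
  have hle : W2sq ρ₁ ρ₂ ≤ ∫ p : En n × En n, dist p.1 p.2 ^ 2 ∂γ := by
    refine csInf_le ⟨0, ?_⟩ ⟨γ, h₁, h₂, rfl⟩
    rintro c ⟨ρ, -, -, rfl⟩
    exact integral_nonneg fun p => sq_nonneg _
  refine hle.trans ?_
  have hcont : Continuous fun p : En n × En n => dist p.1 p.2 ^ 2 := by fun_prop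
  rw [integral_eq_lintegral_of_nonneg_ae (Eventually.of_forall fun p => sq_nonneg _)
    hcont.aestronglyMeasurable]
  have hS : 0 ≤ ∑ j, |(ρ₁ (Om j)).toReal - (ρ₂ (Om j)).toReal| :=
    Finset.sum_nonneg fun j _ => abs_nonneg _
  refine ENNReal.toReal_le_of_le_ofReal (by positivity) (hc.trans ?_)
  have hterm : ∀ j, ρ₁ (Om j) - min (ρ₁ (Om j)) (ρ₂ (Om j)) ≤
      ENNReal.ofReal |(ρ₁ (Om j)).toReal - (ρ₂ (Om j)).toReal| := by
    intro j
    rcases le_total (ρ₁ (Om j)) (ρ₂ (Om j)) with h | h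
    · rw [min_eq_left h, tsub_self]
      exact zero_le
    · rw [min_eq_right h, ← ENNReal.toReal_sub_of_le h (measure_ne_top _ _),
        abs_of_nonneg ENNReal.toReal_nonneg,
        ENNReal.ofReal_toReal (ENNReal.sub_ne_top (measure_ne_top _ _))]
  calc ENNReal.ofReal (r ^ 2) + 4 * ∑ j, (ρ₁ (Om j) - min (ρ₁ (Om j)) (ρ₂ (Om j)))
      ≤ ENNReal.ofReal (r ^ 2) +
          4 * ∑ j, ENNReal.ofReal |(ρ₁ (Om j)).toReal - (ρ₂ (Om j)).toReal| := by
        gcongr with j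
        exact hterm j
    _ = ENNReal.ofReal
          (r ^ 2 + 4 * ∑ j, |(ρ₁ (Om j)).toReal - (ρ₂ (Om j)).toReal|) := by
        rw [ENNReal.ofReal_add (sq_nonneg r) (by positivity), ENNReal.ofReal_mul (by norm_num),
          ENNReal.ofReal_sum_of_nonneg fun j _ => abs_nonneg _]
        norm_num
    _ ≤ _ := ENNReal.ofReal_le_ofReal (by nlinarith [sq_nonneg r])

end
end
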